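/- There exist constants c ∈ (0,1), N > 0 and C > 0 such that for all ν > N, every positive integer k, every j that is the k-th positive zero of J_ν with j < (1+c)ν, and every x* ≥ ν satisfying x*·g(ν/x*) = k − 1/4, one has | j − x* | ≤ C · ν^{1/3} · k^{−4/3}. -/

import Mathlib

open Real MeasureTheory Set

/-- The Bessel function of the first kind of order `ν ≥ 0`, for `x > 0`, via the
integral representation. -/
noncomputable def besselJ (ν x : ℝ) : ℝ :=
  (1 / π) * (∫ θ in (0:ℝ)..π, Real.cos (x * Real.sin θ - ν * θ)) -
    (Real.sin (ν * π) / π) * ∫ t in Set.Ioi (0:ℝ), Real.exp (-x * Real.sinh t - ν * t)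

/-- The function `g(t) = (√(1-t²) - t arccos t)/π`. -/
noncomputable def gfun (t : ℝ) : ℝ := (Real.sqrt (1 - t ^ 2) - t * Real.arccos t) / π

/-- `j` is the `k`-th positive zero of `J_ν`: `j > 0`, `J_ν(j) = 0`, and there are exactly
`k - 1` zeros of `J_ν` in `(0, j)`. -/
def IsKthZero (ν : ℝ) (k : ℕ) (j : ℝ) : Prop :=
  0 < j ∧ besselJ ν j = 0 ∧ {x : ℝ | 0 < x ∧ x < j ∧ besselJ ν x = 0}.ncard = k - 1

namespace BZ
open Filter Topology

lemma I0_deriv (ν x : ℝ) : HasDerivAt (fun x => ∫ θ in (0:ℝ)..π, Real.cos (x * Real.sin θ - ν * θ))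
    (∫ θ in (0:ℝ)..π, -(Real.sin θ) * Real.sin (x * Real.sin θ - ν * θ)) x := by
  refine (intervalIntegral.hasDerivAt_integral_of_dominated_loc_of_deriv_le
    (F := fun x θ => Real.cos (x * Real.sin θ - ν * θ))
    (F' := fun x θ => -(Real.sin θ) * Real.sin (x * Real.sin θ - ν * θ))
    (bound := fun _ => 1) (s := univ) univ_mem ?_ ?_ ?_ ?_ ?_ ?_).2
  · exact Eventually.of_forall fun x => (by fun_prop : Continuous _).aestronglyMeasurable
  · exact (by fun_prop : Continuous _).intervalIntegrable _ _
  · exact (by fun_prop : Continuous _).aestronglyMeasurable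
  · refine Eventually.of_forall fun θ _ x _ => ?_
    rw [norm_mul, norm_neg]
    exact mul_le_one₀ (abs_sin_le_one _) (norm_nonneg _) (abs_sin_le_one _)
  · exact intervalIntegrable_const
  · refine Eventually.of_forall fun θ _ x _ => ?_
    have h : HasDerivAt (fun x => x * Real.sin θ - ν * θ) (Real.sin θ) x := by
      simpa using ((hasDerivAt_id x).mul_const (Real.sin θ)).sub_const (ν * θ)
    exact h.cos.congr_deriv (by ring)

lemma I1_deriv (ν x : ℝ) : HasDerivAt
    (fun x => ∫ θ in (0:ℝ)..π, -(Real.sin θ) * Real.sin (x * Real.sin θ - ν * θ))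
    (∫ θ in (0:ℝ)..π, -(Real.sin θ) ^ 2 * Real.cos (x * Real.sin θ - ν * θ)) x := by
  refine (intervalIntegral.hasDerivAt_integral_of_dominated_loc_of_deriv_le
    (F := fun x θ => -(Real.sin θ) * Real.sin (x * Real.sin θ - ν * θ))
    (F' := fun x θ => -(Real.sin θ) ^ 2 * Real.cos (x * Real.sin θ - ν * θ))
    (bound := fun _ => 1) (s := univ) univ_mem ?_ ?_ ?_ ?_ ?_ ?_).2
  · exact Eventually.of_forall fun x => (by fun_prop : Continuous _).aestronglyMeasurable
  · exact (by fun_prop : Continuous _).intervalIntegrable _ _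
  · exact (by fun_prop : Continuous _).aestronglyMeasurable
  · refine Eventually.of_forall fun θ _ x _ => ?_
    rw [norm_mul, norm_neg, norm_pow]
    exact mul_le_one₀ (pow_le_one₀ (norm_nonneg _) (abs_sin_le_one _)) (norm_nonneg _)
      (abs_cos_le_one _)
  · exact intervalIntegrable_const
  · refine Eventually.of_forall fun θ _ x _ => ?_
    have h : HasDerivAt (fun x => x * Real.sin θ - ν * θ) (Real.sin θ) x := by
      simpa using ((hasDerivAt_id x).mul_const (Real.sin θ)).sub_const (ν * θ)
    exact (h.sin.const_mul (-(Real.sin θ))).congr_deriv (by ring)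

lemma I_ode (ν x : ℝ) :
    x ^ 2 * (∫ θ in (0:ℝ)..π, -(Real.sin θ) ^ 2 * Real.cos (x * Real.sin θ - ν * θ))
    + x * (∫ θ in (0:ℝ)..π, -(Real.sin θ) * Real.sin (x * Real.sin θ - ν * θ))
    + (x ^ 2 - ν ^ 2) * (∫ θ in (0:ℝ)..π, Real.cos (x * Real.sin θ - ν * θ))
    = (x - ν) * Real.sin (ν * π) := by
  have hd : ∀ θ : ℝ, HasDerivAt (fun θ => (x * Real.cos θ + ν) * Real.sin (x * Real.sin θ - ν * θ))
      (x ^ 2 * (-(Real.sin θ) ^ 2 * Real.cos (x * Real.sin θ - ν * θ))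
      + x * (-(Real.sin θ) * Real.sin (x * Real.sin θ - ν * θ))
      + (x ^ 2 - ν ^ 2) * Real.cos (x * Real.sin θ - ν * θ)) θ := by
    intro θ
    have h : HasDerivAt (fun θ => x * Real.sin θ - ν * θ) (x * Real.cos θ - ν) θ := by
      exact (((Real.hasDerivAt_sin θ).const_mul x).sub ((hasDerivAt_id θ).const_mul ν)).congr_deriv (by ring)
    have h2 : HasDerivAt (fun θ => x * Real.cos θ + ν) (x * -Real.sin θ) θ :=
      ((Real.hasDerivAt_cos θ).const_mul x).add_const ν
    refine (h2.mul h.sin).congr_deriv ?_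
    have := Real.sin_sq θ
    rw [this]; ring
  have key := intervalIntegral.integral_eq_sub_of_hasDerivAt (a := 0) (b := π)
    (fun θ _ => hd θ) ((by fun_prop : Continuous _).intervalIntegrable _ _)
  rw [intervalIntegral.integral_add, intervalIntegral.integral_add,
    intervalIntegral.integral_const_mul, intervalIntegral.integral_const_mul,
    intervalIntegral.integral_const_mul] at key
  · rw [key]
    simp
    ring
  all_goals exact (by fun_prop : Continuous _).intervalIntegrable _ _

lemma pow_exp_bdd (n : ℕ) (δ : ℝ) (hδ : 0 < δ) : ∃ C, ∀ s : ℝ, 0 ≤ s → s ^ n * Real.exp (-δ * s) ≤ C := by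
  refine ⟨n.factorial / δ ^ n, fun s hs => ?_⟩
  have h := Real.pow_div_factorial_le_exp (δ * s) (by positivity) n
  rw [div_le_iff₀ (by positivity), mul_pow] at h
  rw [neg_mul, Real.exp_neg, le_div_iff₀ (by positivity), ← div_eq_mul_inv, div_mul_eq_mul_div,
    div_le_iff₀ (Real.exp_pos _)]
  linarith

lemma K_int (n : ℕ) (ν x : ℝ) (hν : 0 < ν) (hx : 0 < x) :
    IntegrableOn (fun t => (Real.sinh t) ^ n * Real.exp (-x * Real.sinh t - ν * t)) (Ioi 0) := by
  obtain ⟨C, hC⟩ := pow_exp_bdd n x hx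
  have hb : IntegrableOn (fun t => C * Real.exp (-ν * t)) (Ioi 0) :=
    (exp_neg_integrableOn_Ioi 0 hν).const_mul C
  refine hb.mono' (by fun_prop : Continuous _).aestronglyMeasurable ?_
  refine (ae_restrict_iff' measurableSet_Ioi).2 (Eventually.of_forall fun t ht => ?_)
  have hs : 0 ≤ Real.sinh t := Real.sinh_nonneg_iff.2 (le_of_lt ht)
  rw [Real.norm_of_nonneg (by positivity), sub_eq_add_neg, Real.exp_add, ← mul_assoc, ← neg_mul]
  exact mul_le_mul_of_nonneg_right (hC _ hs) (Real.exp_pos _).le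

lemma K_deriv (n : ℕ) (ν x : ℝ) (hν : 0 < ν) (hx : 0 < x) : HasDerivAt
    (fun x => ∫ t in Ioi (0:ℝ), (Real.sinh t) ^ n * Real.exp (-x * Real.sinh t - ν * t))
    (-∫ t in Ioi (0:ℝ), (Real.sinh t) ^ (n+1) * Real.exp (-x * Real.sinh t - ν * t)) x := by
  rw [← integral_neg]
  refine (hasDerivAt_integral_of_dominated_loc_of_deriv_le
    (F := fun x t => (Real.sinh t) ^ n * Real.exp (-x * Real.sinh t - ν * t))
    (F' := fun x t => -((Real.sinh t) ^ (n+1) * Real.exp (-x * Real.sinh t - ν * t)))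
    (bound := fun t => (Real.sinh t) ^ (n+1) * Real.exp (-(x/2) * Real.sinh t - ν * t))
    (s := Ioi (x/2)) (Ioi_mem_nhds (by linarith)) ?_ ?_ ?_ ?_ ?_ ?_).2
  · exact Eventually.of_forall fun x => (by fun_prop : Continuous _).aestronglyMeasurable
  · exact K_int n ν x hν hx
  · exact (by fun_prop : Continuous _).aestronglyMeasurable
  · refine (ae_restrict_iff' measurableSet_Ioi).2 (Eventually.of_forall fun t ht y hy => ?_)
    have hs : 0 ≤ Real.sinh t := Real.sinh_nonneg_iff.2 (le_of_lt ht)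
    rw [norm_neg, Real.norm_of_nonneg (by positivity)]
    have : -y * Real.sinh t ≤ -(x/2) * Real.sinh t :=
      mul_le_mul_of_nonneg_right (neg_le_neg (le_of_lt hy)) hs
    gcongr
  · exact K_int (n+1) ν (x/2) hν (by linarith)
  · refine Eventually.of_forall fun t y _ => ?_
    have h : HasDerivAt (fun y => -y * Real.sinh t - ν * t) (-Real.sinh t) y := by
      simpa using ((hasDerivAt_id y).neg.mul_const (Real.sinh t)).sub_const (ν * t)
    exact (h.exp.const_mul ((Real.sinh t)^n)).congr_deriv (by ring)

lemma cosh_exp_tendsto (ν x : ℝ) (hν : 0 < ν) (hx : 0 < x) :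
    Tendsto (fun t => -(x * Real.cosh t - ν) * Real.exp (-x * Real.sinh t - ν * t)) atTop (𝓝 0) := by
  obtain ⟨C, hC⟩ := pow_exp_bdd 1 x hx
  have hlim : Tendsto (fun t => (x * (C + 1) + ν) * Real.exp (-(ν * t))) atTop (𝓝 0) := by
    have : Tendsto (fun t : ℝ => Real.exp (-(ν * t))) atTop (𝓝 0) :=
      Real.tendsto_exp_neg_atTop_nhds_zero.comp (tendsto_id.const_mul_atTop hν)
    simpa using this.const_mul (x * (C + 1) + ν)
  refine squeeze_zero_norm' ?_ hlim
  filter_upwards [eventually_ge_atTop 0] with t ht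
  have hs : 0 ≤ Real.sinh t := Real.sinh_nonneg_iff.2 ht
  have h1 := hC _ hs
  rw [pow_one] at h1
  have h2 : Real.exp (-x * Real.sinh t) ≤ 1 := Real.exp_le_one_iff.2 (by nlinarith)
  have hce : Real.cosh t ≤ Real.sinh t + 1 := by
    have := Real.cosh_sub_sinh t
    have h3 : Real.exp (-t) ≤ 1 := Real.exp_le_one_iff.2 (by linarith)
    linarith
  have hc1 : 0 < Real.cosh t := Real.cosh_pos t
  rw [sub_eq_add_neg (-x * Real.sinh t), Real.exp_add, ← mul_assoc, norm_mul,
    Real.norm_of_nonneg (Real.exp_pos (-(ν*t))).le]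
  refine mul_le_mul_of_nonneg_right ?_ (Real.exp_pos _).le
  rw [norm_mul, Real.norm_of_nonneg (Real.exp_pos _).le, norm_neg]
  have h4 : ‖x * Real.cosh t - ν‖ ≤ x * (Real.sinh t + 1) + ν := by
    rw [Real.norm_eq_abs, abs_le]; constructor <;> nlinarith
  have hep := Real.exp_pos (-x * Real.sinh t)
  calc _ ≤ (x * (Real.sinh t + 1) + ν) * Real.exp (-x * Real.sinh t) := by gcongr
    _ = x * (Real.sinh t * Real.exp (-x * Real.sinh t)) + x * Real.exp (-x * Real.sinh t) + ν * Real.exp (-x * Real.sinh t) := by ring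
    _ ≤ x * C + x * 1 + ν * 1 := by gcongr
    _ = _ := by ring

lemma K_ode (ν x : ℝ) (hν : 0 < ν) (hx : 0 < x) :
    x ^ 2 * (∫ t in Ioi (0:ℝ), (Real.sinh t) ^ 2 * Real.exp (-x * Real.sinh t - ν * t))
    + x * (-∫ t in Ioi (0:ℝ), (Real.sinh t) ^ 1 * Real.exp (-x * Real.sinh t - ν * t))
    + (x ^ 2 - ν ^ 2) * (∫ t in Ioi (0:ℝ), (Real.sinh t) ^ 0 * Real.exp (-x * Real.sinh t - ν * t))
    = (x - ν) := by
  have hd : ∀ t : ℝ, HasDerivAt (fun t => -(x * Real.cosh t - ν) * Real.exp (-x * Real.sinh t - ν * t))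
      (x ^ 2 * ((Real.sinh t) ^ 2 * Real.exp (-x * Real.sinh t - ν * t))
      + -x * ((Real.sinh t) ^ 1 * Real.exp (-x * Real.sinh t - ν * t))
      + (x ^ 2 - ν ^ 2) * ((Real.sinh t) ^ 0 * Real.exp (-x * Real.sinh t - ν * t))) t := by
    intro t
    have h : HasDerivAt (fun t => -x * Real.sinh t - ν * t) (-x * Real.cosh t - ν) t := by
      exact (((Real.hasDerivAt_sinh t).const_mul (-x)).sub ((hasDerivAt_id t).const_mul ν)).congr_deriv (by ring)
    have h2 : HasDerivAt (fun t => -(x * Real.cosh t - ν)) (-(x * Real.sinh t)) t :=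
      (((Real.hasDerivAt_cosh t).const_mul x).sub_const ν).neg
    refine (h2.mul h.exp).congr_deriv ?_
    have := Real.sinh_sq t
    rw [this]; ring
  have i2 := (K_int 2 ν x hν hx).const_mul (x^2)
  have i1 := (K_int 1 ν x hν hx).const_mul (-x)
  have i0 := (K_int 0 ν x hν hx).const_mul (x^2 - ν^2)
  have key := integral_Ioi_of_hasDerivAt_of_tendsto (a := 0) (hd 0).continuousAt.continuousWithinAt
    (fun t _ => hd t) ((i2.add i1).add i0) (cosh_exp_tendsto ν x hν hx)
  have s1 := integral_add (i2.add i1) i0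
  have s2 := integral_add i2 i1
  simp only [Pi.add_apply] at s1
  rw [s1, s2, integral_const_mul, integral_const_mul, integral_const_mul] at key
  simp only [Real.cosh_zero, Real.sinh_zero, mul_zero, sub_zero, Real.exp_zero] at key
  linarith

/-- The function x times the derivative of J. -/
noncomputable def zed (ν x : ℝ) : ℝ :=
  x * ((1 / π) * (∫ θ in (0:ℝ)..π, -(Real.sin θ) * Real.sin (x * Real.sin θ - ν * θ)) +
    (Real.sin (ν * π) / π) * ∫ t in Set.Ioi (0:ℝ), (Real.sinh t) ^ 1 * Real.exp (-x * Real.sinh t - ν * t))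

lemma J_deriv (ν x : ℝ) (hν : 0 < ν) (hx : 0 < x) :
    HasDerivAt (besselJ ν) (zed ν x / x) x := by
  have h := ((I0_deriv ν x).const_mul (1/π)).sub ((K_deriv 0 ν x hν hx).const_mul (Real.sin (ν * π) / π))
  simp only [pow_zero, one_mul] at h
  refine h.congr_deriv ?_
  rw [zed, mul_div_cancel_left₀ _ hx.ne']
  simp

lemma zed_deriv (ν x : ℝ) (hν : 0 < ν) (hx : 0 < x) :
    HasDerivAt (zed ν) (-((x^2 - ν^2) * besselJ ν x) / x) x := by
  have h := ((I1_deriv ν x).const_mul (1/π)).add ((K_deriv 1 ν x hν hx).const_mul (Real.sin (ν * π) / π))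
  have h2 := (hasDerivAt_id x).mul h
  refine h2.congr_deriv ?_
  have e1 := I_ode ν x
  have e2 := K_ode ν x hν hx
  rw [eq_div_iff hx.ne', besselJ]
  simp only [id, pow_zero, one_mul, Pi.add_apply] at e1 e2 ⊢
  simp only [show (1:ℕ) + 1 = 2 from rfl] at ⊢
  linear_combination (1/π) * e1 - (Real.sin (ν * π) / π) * e2

end BZ

namespace BZ
open Filter Topology

lemma osc_bound (F F' : ℝ → ℝ) (K : ℝ) (hF : ∀ t, HasDerivAt F (F' t) t) (hF' : Continuous F')
    (hK : ∀ t, 0 ≤ t → t ≤ π / 2 → |F t| ≤ K * t ^ 2) (hK' : ∀ t, 0 ≤ t → t ≤ π / 2 → |F' t| ≤ K * t) :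
    ∃ C, ∀ x : ℝ, 1 ≤ x → ∀ δ : ℝ, |∫ t in (0:ℝ)..(π/2), Real.cos (x * Real.cos t + δ) * F t| ≤ C / x := by
  have hpi := Real.pi_gt_three
  have hpi4 := Real.pi_lt_four
  have hK0 : 0 ≤ K := by
    have := hK 1 (by norm_num) (by linarith)
    have := abs_nonneg (F 1)
    nlinarith
  have hFc : Continuous F := continuous_iff_continuousAt.2 fun t => (hF t).continuousAt
  refine ⟨K * (π/2)^2 + (2 * (K * π^2/4) + (K * π / 2 + K * π^2/4) * (π / 2)), fun x hx δ => ?_⟩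
  have hx0 : 0 < x := by linarith
  set ε := 1 / x with hε
  have hε0 : 0 < ε := by positivity
  have hε1 : ε ≤ 1 := by rw [hε, div_le_one hx0]; exact hx
  have hεp : ε ≤ π / 2 := by linarith
  have hsplit := intervalIntegral.integral_add_adjacent_intervals (a := 0) (b := ε) (c := π/2) (μ := volume)
    (f := fun t => Real.cos (x * Real.cos t + δ) * F t)
    ((by fun_prop : Continuous _).intervalIntegrable _ _) ((by fun_prop : Continuous _).intervalIntegrable _ _)
  rw [← hsplit]
  have h1 : |∫ t in (0:ℝ)..ε, Real.cos (x * Real.cos t + δ) * F t| ≤ K * (π/2)^2 / x := by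
    have := intervalIntegral.norm_integral_le_of_norm_le_const (a := 0) (b := ε)
      (f := fun t => Real.cos (x * Real.cos t + δ) * F t) (C := K * (π/2)^2) (fun t ht => ?_)
    · rw [sub_zero, abs_of_pos hε0] at this
      rw [div_eq_mul_one_div]; exact this
    · rw [uIoc_of_le hε0.le] at ht
      rw [norm_mul]
      have a1 := hK t ht.1.le (by linarith [ht.2])
      have a2 : ‖Real.cos (x * Real.cos t + δ)‖ ≤ 1 := Real.abs_cos_le_one _
      have a3 : K * t^2 ≤ K * (π/2)^2 := by
        have := ht.1; have := ht.2
        gcongr; linarith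
      rw [Real.norm_eq_abs (F t)]
      calc _ ≤ 1 * |F t| := by gcongr
        _ ≤ _ := by linarith
  have hsin : ∀ t ∈ Icc ε (π/2), 0 < Real.sin t ∧ 2 / π * t ≤ Real.sin t := fun t ht =>
    ⟨Real.sin_pos_of_pos_of_lt_pi (by linarith [ht.1]) (by linarith [ht.2]),
      Real.mul_le_sin (by linarith [ht.1]) ht.2⟩
  have hu : ∀ t ∈ uIcc ε (π/2), HasDerivAt (fun t => F t / Real.sin t)
      ((F' t * Real.sin t - F t * Real.cos t) / Real.sin t ^ 2) t := by
    intro t ht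
    rw [uIcc_of_le hεp] at ht
    exact (hF t).div (Real.hasDerivAt_sin t) (hsin t ht).1.ne'
  have hv : ∀ t ∈ uIcc ε (π/2), HasDerivAt (fun t => -Real.sin (x * Real.cos t + δ) / x)
      (Real.cos (x * Real.cos t + δ) * Real.sin t) t := by
    intro t ht
    have h : HasDerivAt (fun t => x * Real.cos t + δ) (x * -Real.sin t) t :=
      ((Real.hasDerivAt_cos t).const_mul x).add_const δ
    exact (h.sin.neg.div_const x).congr_deriv (by field_simp)
  have hibp := intervalIntegral.integral_mul_deriv_eq_deriv_mul hu hv ?_ ?_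
  rotate_left
  · apply ContinuousOn.intervalIntegrable
    rw [uIcc_of_le hεp]
    apply ContinuousOn.div
    · fun_prop
    · fun_prop
    · intro t ht; exact pow_ne_zero _ (hsin t ht).1.ne'
  · exact (by fun_prop : Continuous _).intervalIntegrable _ _
  have hcongr : ∫ t in ε..(π/2), Real.cos (x * Real.cos t + δ) * F t =
      ∫ t in ε..(π/2), F t / Real.sin t * (Real.cos (x * Real.cos t + δ) * Real.sin t) := by
    apply intervalIntegral.integral_congr
    intro t ht
    rw [uIcc_of_le hεp] at ht
    have := (hsin t ht).1.ne'
    field_simp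
  rw [hcongr, hibp]
  have hub : ∀ t ∈ Icc ε (π/2), |F t / Real.sin t| ≤ K * π^2/4 := by
    intro t ht
    obtain ⟨s0, s1⟩ := hsin t ht
    have t0 : 0 < t := by linarith [ht.1]
    rw [abs_div, abs_of_pos s0, div_le_iff₀ s0]
    have := hK t t0.le ht.2
    calc _ ≤ K * t^2 := this
      _ ≤ K * t * (π / 2) := by have := ht.2; rw [sq, ← mul_assoc]; gcongr
      _ = K * π^2/4 * (2 / π * t) := by field_simp; ring
      _ ≤ _ := by gcongr
  have hsx : ∀ t, |-Real.sin (x * Real.cos t + δ) / x| ≤ 1 / x := fun t => by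
    rw [abs_div, abs_neg, abs_of_pos hx0]
    gcongr; exact Real.abs_sin_le_one _
  have hub' : ∀ t ∈ Icc ε (π/2), |(F' t * Real.sin t - F t * Real.cos t) / Real.sin t ^ 2| ≤ K * π / 2 + K * π^2/4 := by
    intro t ht
    obtain ⟨s0, s1⟩ := hsin t ht
    have t0 : 0 < t := by linarith [ht.1]
    have b1 : |F' t * Real.sin t| ≤ K * π / 2 * Real.sin t ^ 2 := by
      rw [abs_mul, abs_of_pos s0]
      have : |F' t| ≤ K * π / 2 * Real.sin t := by
        calc _ ≤ K * t := hK' t t0.le ht.2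
          _ = K * π / 2 * (2 / π * t) := by field_simp
          _ ≤ _ := by gcongr
      calc _ ≤ (K * π / 2 * Real.sin t) * Real.sin t := by gcongr
        _ = _ := by ring
    have b2 : |F t * Real.cos t| ≤ K * π^2/4 * Real.sin t ^ 2 := by
      rw [abs_mul]
      calc _ ≤ K * t^2 * 1 := by
            have := hK t t0.le ht.2
            have := Real.abs_cos_le_one t
            gcongr
        _ = K * π^2 / 4 * (2 / π * t)^2 := by field_simp; ring
        _ ≤ _ := by gcongr
    rw [abs_div, abs_of_pos (by positivity : 0 < Real.sin t ^2), div_le_iff₀ (by positivity)]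
    calc _ ≤ |F' t * Real.sin t| + |F t * Real.cos t| := abs_sub _ _
      _ ≤ _ := by linarith
  have h3 : |∫ t in ε..(π/2), (F' t * Real.sin t - F t * Real.cos t) / Real.sin t ^ 2 *
      (-Real.sin (x * Real.cos t + δ) / x)| ≤ (K * π / 2 + K * π^2/4) * (π / 2) / x := by
    have := intervalIntegral.norm_integral_le_of_norm_le_const (a := ε) (b := π/2)
      (f := fun t => (F' t * Real.sin t - F t * Real.cos t) / Real.sin t ^ 2 *
      (-Real.sin (x * Real.cos t + δ) / x)) (C := (K * π / 2 + K * π^2/4) * (1 / x)) (fun t ht => ?_)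
    · rw [abs_of_nonneg (by linarith)] at this
      refine this.trans ?_
      have : π / 2 - ε ≤ π / 2 := by linarith
      calc _ ≤ (K * π / 2 + K * π^2/4) * (1 / x) * (π / 2) := by gcongr
        _ = _ := by ring
    · rw [uIoc_of_le hεp] at ht
      rw [norm_mul]
      exact mul_le_mul (hub' t ⟨ht.1.le, ht.2⟩) (hsx t) (norm_nonneg _) (by positivity)
  have h4 : ∀ t ∈ Icc ε (π/2), |F t / Real.sin t * (-Real.sin (x * Real.cos t + δ) / x)| ≤ K * π^2/4 * (1/x) := by
    intro t ht
    rw [abs_mul]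
    exact mul_le_mul (hub t ht) (hsx t) (abs_nonneg _) (by positivity)
  have h5 := h4 (π/2) ⟨hεp, le_rfl⟩
  have h6 := h4 ε ⟨le_rfl, hεp⟩
  have e : (K * (π/2)^2 + (2 * (K * π^2/4) + (K * π / 2 + K * π^2/4) * (π / 2))) / x
    = K * (π/2)^2 / x + (K * π^2/4 * (1/x) + K * π^2/4 * (1/x) + (K * π / 2 + K * π^2/4) * (π / 2) / x) := by ring
  rw [e]
  refine (abs_add_le _ _).trans (add_le_add h1 ?_)
  refine (abs_sub _ _).trans (add_le_add ?_ h3)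
  exact (abs_sub _ _).trans (add_le_add h5 h6)

/-- Fresnel integrals -/
noncomputable def fc (s : ℝ) : ℝ := ∫ v in (0:ℝ)..s, Real.cos (v ^ 2)
noncomputable def fs (s : ℝ) : ℝ := ∫ v in (0:ℝ)..s, Real.sin (v ^ 2)
noncomputable def fg (δ s : ℝ) : ℝ := ∫ t in (0:ℝ)..1, Real.cos (s ^ 2 * (1 + t ^ 2) + δ) / (1 + t ^ 2)

lemma fc_deriv (s : ℝ) : HasDerivAt fc (Real.cos (s ^ 2)) s :=
  intervalIntegral.integral_hasDerivAt_right ((by fun_prop : Continuous _).intervalIntegrable _ _)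
    (Continuous.stronglyMeasurableAtFilter (by fun_prop) _ _) (by fun_prop)

lemma fs_deriv (s : ℝ) : HasDerivAt fs (Real.sin (s ^ 2)) s :=
  intervalIntegral.integral_hasDerivAt_right ((by fun_prop : Continuous _).intervalIntegrable _ _)
    (Continuous.stronglyMeasurableAtFilter (by fun_prop) _ _) (by fun_prop)

lemma cont_aux (f : ℝ → ℝ) (hf : Continuous f) : Continuous (fun t : ℝ => f t / (1 + t ^ 2)) :=
  hf.div (by fun_prop) (fun t => by positivity)

lemma fg_deriv (δ s : ℝ) : HasDerivAt (fg δ)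
    (∫ t in (0:ℝ)..1, -(2 * s) * Real.sin (s ^ 2 * (1 + t ^ 2) + δ)) s := by
  refine (intervalIntegral.hasDerivAt_integral_of_dominated_loc_of_deriv_le
    (F := fun s t => Real.cos (s ^ 2 * (1 + t ^ 2) + δ) / (1 + t ^ 2))
    (F' := fun s t => -(2 * s) * Real.sin (s ^ 2 * (1 + t ^ 2) + δ))
    (bound := fun _ => 2 * (|s| + 1)) (s := Metric.ball s 1) (Metric.ball_mem_nhds s one_pos) ?_ ?_ ?_ ?_ ?_ ?_).2
  · exact Eventually.of_forall fun x => (cont_aux _ (by fun_prop)).aestronglyMeasurable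
  · exact (cont_aux _ (by fun_prop)).intervalIntegrable _ _
  · exact (by fun_prop : Continuous _).aestronglyMeasurable
  · refine Eventually.of_forall fun t _ x hx => ?_
    rw [Metric.mem_ball, Real.dist_eq] at hx
    have h1 : |x| ≤ |s| + 1 := by
      have := abs_sub_abs_le_abs_sub x s; linarith
    rw [norm_mul, norm_neg, norm_mul]
    have h2 : ‖Real.sin (x ^ 2 * (1 + t ^ 2) + δ)‖ ≤ 1 := Real.abs_sin_le_one _
    rw [Real.norm_of_nonneg (by norm_num : (0:ℝ) ≤ 2), Real.norm_eq_abs x]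
    calc _ ≤ 2 * |x| * 1 := by gcongr
      _ ≤ _ := by linarith
  · exact intervalIntegrable_const
  · refine Eventually.of_forall fun t _ x _ => ?_
    have h : HasDerivAt (fun x => x ^ 2 * (1 + t ^ 2) + δ) (2 * x * (1 + t ^ 2)) x := by
      have := (((hasDerivAt_id x).pow 2).mul_const (1 + t ^ 2)).add_const δ
      exact this.congr_deriv (by simp)
    refine (h.cos.div_const (1 + t ^ 2)).congr_deriv ?_
    have : (1 + t ^ 2) ≠ 0 := by positivity
    field_simp

lemma fg_decay (δ : ℝ) : Tendsto (fg δ) atTop (𝓝 0) := by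
  have hlim : Tendsto (fun s : ℝ => 1 / √s + 5 / s) atTop (𝓝 0) := by
    have a : Tendsto (fun s : ℝ => 1 / √s) atTop (𝓝 0) :=
      Tendsto.comp (g := fun u : ℝ => 1 / u) (by simpa using tendsto_inv_atTop_zero) Real.tendsto_sqrt_atTop
    have b : Tendsto (fun s : ℝ => 5 / s) atTop (𝓝 0) := tendsto_const_nhds.div_atTop tendsto_id
    simpa using a.add b
  refine squeeze_zero_norm' ?_ hlim
  filter_upwards [eventually_ge_atTop 1] with s hs
  have hs0 : 0 < s := by linarith
  set r := √s with hr
  have hr1 : 1 ≤ r := Real.one_le_sqrt.2 hs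
  have hr2 : r ^ 2 = s := Real.sq_sqrt hs0.le
  set ε := 1 / r with hε
  have hε0 : 0 < ε := by positivity
  have hε1 : ε ≤ 1 := by rw [hε, div_le_one (by linarith)]; exact hr1
  have hsplit := intervalIntegral.integral_add_adjacent_intervals (a := 0) (b := ε) (c := 1) (μ := volume)
    (f := fun t => Real.cos (s ^ 2 * (1 + t ^ 2) + δ) / (1 + t ^ 2))
    ((cont_aux _ (by fun_prop)).intervalIntegrable _ _) ((cont_aux _ (by fun_prop)).intervalIntegrable _ _)
  rw [fg, ← hsplit]
  have hu : ∀ t ∈ uIcc ε 1, HasDerivAt (fun t => 1 / (2 * s ^ 2 * (t + t ^ 3)))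
      (-(1 + 3 * t ^ 2) / (2 * s ^ 2 * (t + t ^ 3) ^ 2)) t := by
    intro t ht
    rw [uIcc_of_le hε1] at ht
    have t0 : 0 < t := by linarith [ht.1]
    have h : HasDerivAt (fun t => 2 * s ^ 2 * (t + t ^ 3)) (2 * s ^ 2 * (1 + 3 * t ^ 2)) t := by
      have := ((hasDerivAt_id t).add ((hasDerivAt_id t).pow 3)).const_mul (2 * s ^ 2)
      exact this.congr_deriv (by simp)
    have h2 := (hasDerivAt_const t (1:ℝ)).div h (by positivity)
    refine h2.congr_deriv ?_
    field_simp
    ring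
  have hv : ∀ t ∈ uIcc ε 1, HasDerivAt (fun t => Real.sin (s ^ 2 * (1 + t ^ 2) + δ))
      (Real.cos (s ^ 2 * (1 + t ^ 2) + δ) * (s ^ 2 * (2 * t))) t := by
    intro t ht
    have h : HasDerivAt (fun t => s ^ 2 * (1 + t ^ 2) + δ) (s ^ 2 * (2 * t)) t := by
      have := ((((hasDerivAt_id t).pow 2).const_add 1).const_mul (s ^ 2)).add_const δ
      exact this.congr_deriv (by simp)
    exact h.sin
  have hibp := intervalIntegral.integral_mul_deriv_eq_deriv_mul hu hv ?_ ?_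
  rotate_left
  · apply ContinuousOn.intervalIntegrable
    rw [uIcc_of_le hε1]
    apply ContinuousOn.div
    · fun_prop
    · fun_prop
    · intro t ht
      have t0 : 0 < t := by linarith [ht.1]
      positivity
  · exact (by fun_prop : Continuous _).intervalIntegrable _ _
  have hcongr : ∫ t in ε..1, Real.cos (s ^ 2 * (1 + t ^ 2) + δ) / (1 + t ^ 2) =
      ∫ t in ε..1, 1 / (2 * s ^ 2 * (t + t ^ 3)) * (Real.cos (s ^ 2 * (1 + t ^ 2) + δ) * (s ^ 2 * (2 * t))) := by
    apply intervalIntegral.integral_congr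
    intro t ht
    rw [uIcc_of_le hε1] at ht
    have t0 : 0 < t := by linarith [ht.1]
    have : t + t ^ 3 = t * (1 + t ^ 2) := by ring
    simp only [this]
    field_simp
  rw [hcongr, hibp]
  have h1 : ‖∫ t in (0:ℝ)..ε, Real.cos (s ^ 2 * (1 + t ^ 2) + δ) / (1 + t ^ 2)‖ ≤ 1 / r := by
    have := intervalIntegral.norm_integral_le_of_norm_le_const (a := 0) (b := ε)
      (f := fun t => Real.cos (s ^ 2 * (1 + t ^ 2) + δ) / (1 + t ^ 2)) (C := 1) (fun t ht => ?_)
    · rwa [sub_zero, abs_of_pos hε0, one_mul] at this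
    · rw [norm_div, Real.norm_of_nonneg (by positivity : 0 ≤ 1 + t ^ 2)]
      rw [div_le_one (by positivity)]
      have : ‖Real.cos (s ^ 2 * (1 + t ^ 2) + δ)‖ ≤ 1 := Real.abs_cos_le_one _
      nlinarith [sq_nonneg t]
  have hsb : ∀ t, ‖Real.sin (s ^ 2 * (1 + t ^ 2) + δ)‖ ≤ 1 := fun t => Real.abs_sin_le_one _
  have hε2 : ε ^ 2 = 1 / s := by rw [hε, div_pow, hr2, one_pow]
  have hb : ∀ t ∈ Icc ε 1, ‖1 / (2 * s ^ 2 * (t + t ^ 3)) * Real.sin (s ^ 2 * (1 + t ^ 2) + δ)‖ ≤ 1 / s := by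
    intro t ht
    have t0 : 0 < t := by linarith [ht.1]
    rw [norm_mul, Real.norm_of_nonneg (by positivity)]
    have c1 : 1 / s ≤ t := by
      calc _ = ε ^ 2 := hε2.symm
        _ ≤ ε := by nlinarith
        _ ≤ t := ht.1
    have : 1 / (2 * s ^ 2 * (t + t ^ 3)) ≤ 1 / s := by
      apply one_div_le_one_div_of_le hs0
      rw [div_le_iff₀ hs0] at c1
      have : 0 < t ^ 3 := by positivity
      nlinarith [mul_pos hs0 hs0]
    calc _ ≤ 1 / s * 1 := mul_le_mul this (hsb t) (norm_nonneg _) (by positivity)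
      _ = _ := by ring
  have h3 : ‖∫ t in ε..1, -(1 + 3 * t ^ 2) / (2 * s ^ 2 * (t + t ^ 3) ^ 2) * Real.sin (s ^ 2 * (1 + t ^ 2) + δ)‖ ≤ 2 / s := by
    have := intervalIntegral.norm_integral_le_of_norm_le_const (a := ε) (b := 1)
      (f := fun t => -(1 + 3 * t ^ 2) / (2 * s ^ 2 * (t + t ^ 3) ^ 2) * Real.sin (s ^ 2 * (1 + t ^ 2) + δ)) (C := 2 / s) (fun t ht => ?_)
    · rw [abs_of_nonneg (by linarith)] at this
      refine this.trans ?_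
      have : 0 < 2 / s := by positivity
      nlinarith
    · rw [uIoc_of_le hε1] at ht
      have t0 : 0 < t := by linarith [ht.1]
      rw [norm_mul, norm_div, norm_neg, Real.norm_of_nonneg (by positivity), Real.norm_of_nonneg (by positivity)]
      have : (1 + 3 * t ^ 2) / (2 * s ^ 2 * (t + t ^ 3) ^ 2) ≤ 2 / s := by
        rw [div_le_div_iff₀ (by positivity) hs0]
        have d1 : 1 / s ≤ t ^ 2 := by rw [← hε2]; have := ht.1; gcongr
        rw [div_le_iff₀ hs0] at d1
        have d2 : t ^ 2 ≤ (t + t ^ 3) ^ 2 := by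
          have : 0 < t ^ 3 := by positivity
          gcongr; linarith
        have d3 : t ^ 2 ≤ 1 := by have := ht.2; nlinarith
        have d4 : 1 ≤ (t + t ^ 3) ^ 2 * s := by nlinarith
        nlinarith
      calc _ ≤ 2 / s * 1 := mul_le_mul this (hsb t) (norm_nonneg _) (by positivity)
        _ = _ := by ring
  have h5 := hb 1 ⟨hε1, le_rfl⟩
  have h6 := hb ε ⟨le_rfl, hε1⟩
  refine (norm_add_le _ _).trans (add_le_add h1 ?_)
  refine (norm_sub_le _ _).trans ?_
  have := (norm_sub_le (1 / (2 * s ^ 2 * (1 + 1 ^ 3)) * Real.sin (s ^ 2 * (1 + 1 ^ 2) + δ))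
    (1 / (2 * s ^ 2 * (ε + ε ^ 3)) * Real.sin (s ^ 2 * (1 + ε ^ 2) + δ)))
  have e : 5 / s = 1 / s + 1/s + 2/s + 1/s := by ring
  have : 0 < 1 / s := by positivity
  linarith

end BZ

namespace BZ
open Filter Topology

lemma fc_scale (s : ℝ) : fc s = s * ∫ t in (0:ℝ)..1, Real.cos ((s * t) ^ 2) := by
  have := intervalIntegral.mul_integral_comp_mul_left (a := 0) (b := 1) (f := fun v => Real.cos (v ^ 2)) s
  rw [mul_zero, mul_one] at this
  rw [fc, this]

lemma fs_scale (s : ℝ) : fs s = s * ∫ t in (0:ℝ)..1, Real.sin ((s * t) ^ 2) := by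
  have := intervalIntegral.mul_integral_comp_mul_left (a := 0) (b := 1) (f := fun v => Real.sin (v ^ 2)) s
  rw [mul_zero, mul_one] at this
  rw [fs, this]

lemma fres_comb (a b s : ℝ) : a * fc s + b * fs s =
    ∫ t in (0:ℝ)..1, s * (a * Real.cos ((s * t) ^ 2) + b * Real.sin ((s * t) ^ 2)) := by
  rw [intervalIntegral.integral_const_mul, intervalIntegral.integral_add,
    intervalIntegral.integral_const_mul, intervalIntegral.integral_const_mul, fc_scale, fs_scale]
  · ring
  all_goals exact (by fun_prop : Continuous _).intervalIntegrable _ _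

lemma const_of_deriv_zero (f : ℝ → ℝ) (h : ∀ s, HasDerivAt f 0 s) (a b : ℝ) : f a = f b :=
  is_const_of_deriv_eq_zero (fun s => (h s).differentiableAt) (fun s => (h s).deriv) a b

lemma fres1 (s : ℝ) : fc s ^ 2 - fs s ^ 2 = fg (-(π/2)) s := by
  have h0 : ∀ s, HasDerivAt (fun s => fc s ^ 2 - fs s ^ 2 - fg (-(π/2)) s) 0 s := by
    intro s
    have := (((fc_deriv s).pow 2).sub ((fs_deriv s).pow 2)).sub (fg_deriv (-(π/2)) s)
    refine this.congr_deriv ?_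
    have e := fres_comb (2 * Real.cos (s ^ 2)) (-2 * Real.sin (s^2)) s
    have e2 : (∫ t in (0:ℝ)..1, -(2 * s) * Real.sin (s ^ 2 * (1 + t ^ 2) + -(π/2))) =
      ∫ t in (0:ℝ)..1, s * (2 * Real.cos (s ^ 2) * Real.cos ((s * t) ^ 2) + -2 * Real.sin (s^2) * Real.sin ((s * t) ^ 2)) := by
      congr 1; ext t
      rw [← sub_eq_add_neg, Real.sin_sub_pi_div_two, show s ^ 2 * (1 + t ^ 2) = s ^ 2 + (s * t) ^ 2 by ring, Real.cos_add]
      ring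
    rw [e2, ← e]; simp; ring
  have := const_of_deriv_zero _ h0 s 0
  simp [fc, fs, fg] at this
  simp [fc, fs, fg]
  linarith

lemma fres2 (s : ℝ) : 2 * (fc s * fs s) = π / 4 - fg 0 s := by
  have h0 : ∀ s, HasDerivAt (fun s => 2 * (fc s * fs s) + fg 0 s) 0 s := by
    intro s
    have := (((fc_deriv s).mul (fs_deriv s)).const_mul 2).add (fg_deriv 0 s)
    refine this.congr_deriv ?_
    have e := fres_comb (2 * Real.sin (s ^ 2)) (2 * Real.cos (s^2)) s
    have e2 : (∫ t in (0:ℝ)..1, -(2 * s) * Real.sin (s ^ 2 * (1 + t ^ 2) + 0)) =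
      -∫ t in (0:ℝ)..1, s * (2 * Real.sin (s ^ 2) * Real.cos ((s * t) ^ 2) + 2 * Real.cos (s^2) * Real.sin ((s * t) ^ 2)) := by
      rw [← intervalIntegral.integral_neg]
      congr 1; ext t
      rw [add_zero, show s ^ 2 * (1 + t ^ 2) = s ^ 2 + (s * t) ^ 2 by ring, Real.sin_add]
      ring
    rw [e2, ← e]; ring
  have := const_of_deriv_zero _ h0 s 0
  have e0 : fg 0 0 = π / 4 := by
    simp [fg]
  have e1 : fc 0 = 0 := by simp [fc]
  simp only [e0, e1] at this
  linarith

lemma fres_sum : Tendsto (fun s => (fc s + fs s) ^ 2) atTop (𝓝 (π/2)) ∧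
    Tendsto (fun s => fc s - fs s) atTop (𝓝 0) := by
  have t1 := fg_decay (-(π/2))
  have t2 := fg_decay 0
  have hq : Tendsto (fun s => fc s ^ 2 + fs s ^ 2) atTop (𝓝 (π/4)) := by
    have : Tendsto (fun s => √((fg (-(π/2)) s) ^ 2 + (π / 4 - fg 0 s) ^ 2)) atTop (𝓝 (√(0^2 + (π/4-0)^2))) :=
      ((t1.pow 2).add ((t2.const_sub (π/4)).pow 2)).sqrt
    have e : √(0^2 + (π/4-0)^2) = π / 4 := by
      rw [show (0:ℝ)^2 + (π/4-0)^2 = (π/4)^2 by ring, Real.sqrt_sq (by positivity)]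
    rw [e] at this
    refine this.congr fun s => ?_
    rw [← fres1, ← fres2]
    rw [show (fc s ^ 2 - fs s ^ 2) ^ 2 + (2 * (fc s * fs s)) ^ 2 = (fc s ^ 2 + fs s ^ 2) ^ 2 by ring,
      Real.sqrt_sq (by positivity)]
  have hp : Tendsto (fun s => 2 * (fc s * fs s)) atTop (𝓝 (π/4)) := by
    simp_rw [fres2]
    simpa using t2.const_sub (π/4)
  constructor
  · have := hq.add hp
    rw [show π/4+π/4 = π/2 by ring] at this
    exact this.congr fun s => by ring
  · have := (hq.sub hp).sqrt
    rw [sub_self, Real.sqrt_zero] at this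
    rw [tendsto_zero_iff_abs_tendsto_zero]
    refine this.congr fun s => ?_
    rw [show fc s ^ 2 + fs s ^ 2 - 2 * (fc s * fs s) = (fc s - fs s)^2 by ring, Real.sqrt_sq_eq_abs]
    rfl

lemma main_int (x δ : ℝ) (hx : 0 < x) :
    √x * ∫ t in (0:ℝ)..(π/2), Real.cos (x * Real.cos t + δ) * Real.cos (t / 2) =
    √2 * (Real.cos (x + δ) * fc √x + Real.sin (x + δ) * fs √x) := by
  have hd : ∀ t ∈ uIcc 0 (π/2), HasDerivAt (fun t => √2 * √x * Real.sin (t/2)) (√2 * √x * (Real.cos (t/2) * (1/2))) t := by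
    intro t _
    have h : HasDerivAt (fun t : ℝ => t / 2) (1/2) t := (hasDerivAt_id t).div_const 2
    exact h.sin.const_mul _
  have h := intervalIntegral.integral_comp_mul_deriv (g := fun v => Real.cos (x + δ - v ^ 2)) hd
    (by fun_prop) (by fun_prop)
  have s2 : √2 ^ 2 = 2 := Real.sq_sqrt (by norm_num)
  have sx : √x ^ 2 = x := Real.sq_sqrt hx.le
  have e0 : √2 * √x * Real.sin (0 / 2) = 0 := by simp
  have e1 : √2 * √x * Real.sin (π / 2 / 2) = √x := by
    rw [show π/2/2 = π/4 by ring, Real.sin_pi_div_four]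
    linear_combination (√x / 2) * s2
  rw [e0, e1] at h
  have el : (∫ t in (0:ℝ)..(π/2), ((fun v => Real.cos (x + δ - v ^ 2)) ∘ fun t => √2 * √x * Real.sin (t/2)) t *
      (√2 * √x * (Real.cos (t/2) * (1/2)))) =
      (√2 * √x / 2) * ∫ t in (0:ℝ)..(π/2), Real.cos (x * Real.cos t + δ) * Real.cos (t / 2) := by
    rw [← intervalIntegral.integral_const_mul]
    congr 1; ext t
    have : Real.cos t = 1 - 2 * Real.sin (t/2) ^ 2 := by
      have := Real.cos_two_mul (t/2)
      rw [mul_div_cancel₀ _ (by norm_num : (2:ℝ) ≠ 0)] at this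
      rw [this, Real.cos_sq']; ring
    simp only [Function.comp]
    rw [mul_pow, mul_pow, s2, sx, show x + δ - 2 * x * Real.sin (t/2)^2 = x * Real.cos t + δ by rw [this]; ring]
    ring
  have er : (∫ v in (0:ℝ)..√x, Real.cos (x + δ - v ^ 2)) = Real.cos (x + δ) * fc √x + Real.sin (x + δ) * fs √x := by
    simp_rw [Real.cos_sub]
    rw [intervalIntegral.integral_add, intervalIntegral.integral_const_mul, intervalIntegral.integral_const_mul]
    · rfl
    all_goals exact (by fun_prop : Continuous _).intervalIntegrable _ _
  rw [el, er] at h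
  rw [← h]
  linear_combination (-√x / 2 * ∫ t in (0:ℝ)..(π/2), Real.cos (x * Real.cos t + δ) * Real.cos (t / 2)) * s2

lemma fres_split (x δ c s : ℝ) : √2 * (Real.cos (x + δ) * c + Real.sin (x + δ) * s) =
    (c + s) * Real.cos (x + δ - π/4) + (c - s) * Real.cos (x + δ + π/4) := by
  have s2 : √2 ^ 2 = 2 := Real.sq_sqrt (by norm_num)
  rw [Real.cos_sub _ (π/4), Real.cos_add _ (π/4), Real.sin_pi_div_four, Real.cos_pi_div_four]
  ring

lemma stat_phase (F F' F'' : ℝ → ℝ) (h0 : F 0 = 1) (h1 : F' 0 = 0) (hF : ∀ t, HasDerivAt F (F' t) t)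
    (hF' : ∀ t, HasDerivAt F' (F'' t) t) (K : ℝ) (hK : ∀ t, |F'' t| ≤ K) (δ : ℝ) :
    Tendsto (fun x => √x * (∫ t in (0:ℝ)..(π/2), Real.cos (x * Real.cos t + δ) * F t)
      - (fc √x + fs √x) * Real.cos (x + δ - π/4)) atTop (𝓝 0) := by
  have hc : ∀ t, HasDerivAt (fun t => Real.cos (t / 2)) (-Real.sin (t/2) * (1/2)) t := fun t => by
    have h : HasDerivAt (fun t : ℝ => t / 2) (1/2) t := (hasDerivAt_id t).div_const 2
    exact h.cos
  have hc' : ∀ t, HasDerivAt (fun t => -Real.sin (t/2) * (1/2)) (-(Real.cos (t/2) * (1/2)) * (1/2)) t := fun t => by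
    have h : HasDerivAt (fun t : ℝ => t / 2) (1/2) t := (hasDerivAt_id t).div_const 2
    exact h.sin.neg.mul_const _
  have hG : ∀ t, HasDerivAt (fun t => F t - Real.cos (t/2)) (F' t - (-Real.sin (t/2) * (1/2))) t :=
    fun t => (hF t).sub (hc t)
  have hG' : ∀ t, HasDerivAt (fun t => F' t - (-Real.sin (t/2) * (1/2)))
      (F'' t - (-(Real.cos (t/2) * (1/2)) * (1/2))) t :=
    fun t => (hF' t).sub (hc' t)
  have hFc : Continuous F := continuous_iff_continuousAt.2 fun t => (hF t).continuousAt
  have hFc' : Continuous F' := continuous_iff_continuousAt.2 fun t => (hF' t).continuousAt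
  have hb2 : ∀ t, |F'' t - (-(Real.cos (t/2) * (1/2)) * (1/2))| ≤ K + 1 := by
    intro t
    refine (abs_sub _ _).trans (add_le_add (hK t) ?_)
    have := Real.abs_cos_le_one (t/2)
    rw [abs_le] at this ⊢
    constructor <;> linarith
  have hb1 : ∀ t, 0 ≤ t → |F' t - (-Real.sin (t/2) * (1/2))| ≤ (K+1) * t := by
    intro t ht
    have := Convex.norm_image_sub_le_of_norm_hasDerivWithin_le (f := fun t => F' t - (-Real.sin (t/2) * (1/2)))
      (s := univ) (C := K + 1) (x := 0) (y := t) (fun t _ => (hG' t).hasDerivWithinAt) (fun t _ => hb2 t) convex_univ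
      (mem_univ _) (mem_univ _)
    simpa [h1, abs_of_nonneg ht] using this
  have hK0 : 0 ≤ K + 1 := (abs_nonneg _).trans (hb2 0)
  have hb0 : ∀ t, 0 ≤ t → |F t - Real.cos (t/2)| ≤ (K+1) * t ^ 2 := by
    intro t ht
    have := Convex.norm_image_sub_le_of_norm_hasDerivWithin_le (f := fun t => F t - Real.cos (t/2))
      (s := Icc 0 t) (C := (K + 1) * t) (x := 0) (y := t) (fun t _ => (hG t).hasDerivWithinAt)
      (fun u hu => (hb1 u hu.1).trans (by have := hu.2; gcongr)) (convex_Icc 0 t)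
      ⟨le_rfl, ht⟩ ⟨ht, le_rfl⟩
    simp [h0, abs_of_nonneg ht] at this
    linarith
  obtain ⟨C, hC⟩ := osc_bound _ _ (K+1) hG (by fun_prop) (fun t ht _ => hb0 t ht) (fun t ht _ => hb1 t ht)
  have hsq : Tendsto (fun x : ℝ => √x) atTop atTop := Real.tendsto_sqrt_atTop
  have hl1 : Tendsto (fun x : ℝ => √x * (∫ t in (0:ℝ)..(π/2), Real.cos (x * Real.cos t + δ) * (F t - Real.cos (t/2)))) atTop (𝓝 0) := by
    have hlim : Tendsto (fun x : ℝ => C / √x) atTop (𝓝 0) := tendsto_const_nhds.div_atTop hsq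
    refine squeeze_zero_norm' ?_ hlim
    filter_upwards [eventually_ge_atTop 1] with x hx
    have hx0 : 0 < x := by linarith
    have hs : 0 < √x := Real.sqrt_pos.2 hx0
    rw [norm_mul, Real.norm_of_nonneg hs.le]
    calc _ ≤ √x * (C / x) := by gcongr; exact hC x hx δ
      _ = C / √x := by
        have : √x ^ 2 = x := Real.sq_sqrt hx0.le
        field_simp
        rw [this]
        ring
  have hl2 : Tendsto (fun x : ℝ => (fc √x - fs √x) * Real.cos (x + δ + π/4)) atTop (𝓝 0) := by
    have h := fres_sum.2.comp hsq
    rw [tendsto_zero_iff_norm_tendsto_zero] at h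
    refine squeeze_zero_norm (fun x => ?_) h
    rw [norm_mul]
    exact mul_le_of_le_one_right (norm_nonneg _) (Real.abs_cos_le_one _)
  have := hl1.add hl2
  rw [add_zero] at this
  refine this.congr' ?_
  filter_upwards [eventually_gt_atTop 0] with x hx
  have e := main_int x δ hx
  rw [fres_split] at e
  have e2 : (∫ t in (0:ℝ)..(π/2), Real.cos (x * Real.cos t + δ) * (F t - Real.cos (t/2))) =
     (∫ t in (0:ℝ)..(π/2), Real.cos (x * Real.cos t + δ) * F t) -
     ∫ t in (0:ℝ)..(π/2), Real.cos (x * Real.cos t + δ) * Real.cos (t / 2) := by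
    rw [← intervalIntegral.integral_sub]
    · congr 1; ext t; ring
    all_goals exact (by fun_prop : Continuous _).intervalIntegrable _ _
  rw [e2]
  linear_combination -e

lemma fold (f : ℝ → ℝ) (hf : Continuous f) : ∫ θ in (0:ℝ)..π, f θ =
    ∫ t in (0:ℝ)..(π/2), (f (π/2 + t) + f (π/2 - t)) := by
  have hsplit := intervalIntegral.integral_add_adjacent_intervals (a := 0) (b := π/2) (c := π) (μ := volume)
    (f := f) (hf.intervalIntegrable _ _) (hf.intervalIntegrable _ _)
  rw [intervalIntegral.integral_add, intervalIntegral.integral_comp_add_left, intervalIntegral.integral_comp_sub_left,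
    ← hsplit]
  · rw [add_zero, sub_zero, sub_self, add_halves, add_comm]
  all_goals exact (by fun_prop : Continuous _).intervalIntegrable _ _

lemma fold0 (ν x : ℝ) : ∫ θ in (0:ℝ)..π, Real.cos (x * Real.sin θ - ν * θ) =
    2 * ∫ t in (0:ℝ)..(π/2), Real.cos (x * Real.cos t + -(ν * π / 2)) * Real.cos (ν * t) := by
  rw [fold _ (by fun_prop), ← intervalIntegral.integral_const_mul]
  congr 1; ext t
  rw [Real.sin_pi_div_two_sub, add_comm (π/2), Real.sin_add_pi_div_two,
    show x * Real.cos t - ν * (t + π/2) = (x * Real.cos t + -(ν * π / 2)) - ν * t by ring,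
    show x * Real.cos t - ν * (π/2 - t) = (x * Real.cos t + -(ν * π / 2)) + ν * t by ring,
    Real.cos_sub _ (ν * t), Real.cos_add _ (ν * t)]
  ring

lemma fold1 (ν x : ℝ) : ∫ θ in (0:ℝ)..π, -(Real.sin θ) * Real.sin (x * Real.sin θ - ν * θ) =
    2 * ∫ t in (0:ℝ)..(π/2), Real.cos (x * Real.cos t + (-(ν * π / 2) + π/2)) * (Real.cos t * Real.cos (ν * t)) := by
  rw [fold _ (by fun_prop), ← intervalIntegral.integral_const_mul]
  congr 1; ext t
  rw [← add_assoc, Real.cos_add_pi_div_two, Real.sin_pi_div_two_sub, add_comm (π/2), Real.sin_add_pi_div_two,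
    show x * Real.cos t - ν * (t + π/2) = (x * Real.cos t + -(ν * π / 2)) - ν * t by ring,
    show x * Real.cos t - ν * (π/2 - t) = (x * Real.cos t + -(ν * π / 2)) + ν * t by ring,
    Real.sin_sub _ (ν * t), Real.sin_add _ (ν * t)]
  ring

lemma K_decay (n : ℕ) (hn : n ≤ 1) (ν : ℝ) (hν : 0 < ν) : Tendsto (fun x => √x *
    ∫ t in Ioi (0:ℝ), (Real.sinh t) ^ n * Real.exp (-x * Real.sinh t - ν * t)) atTop (𝓝 0) := by
  have hlim : Tendsto (fun x : ℝ => 1 / √x) atTop (𝓝 0) := tendsto_const_nhds.div_atTop Real.tendsto_sqrt_atTop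
  refine squeeze_zero_norm' ?_ hlim
  filter_upwards [eventually_gt_atTop 0] with x hx
  have hs : 0 < √x := Real.sqrt_pos.2 hx
  have hd : ∀ t : ℝ, HasDerivAt (fun t => -(1/x) * Real.exp (-x * Real.sinh t))
      (Real.cosh t * Real.exp (-x * Real.sinh t)) t := by
    intro t
    have h := ((Real.hasDerivAt_sinh t).const_mul (-x)).exp.const_mul (-(1/x))
    exact h.congr_deriv (by field_simp)
  have hsinh : Tendsto Real.sinh atTop atTop :=
    tendsto_atTop_mono' atTop (by filter_upwards [eventually_ge_atTop 0] with t ht using Real.self_le_sinh_iff.2 ht) tendsto_id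
  have hl : Tendsto (fun t => -(1/x) * Real.exp (-x * Real.sinh t)) atTop (𝓝 0) := by
    have : Tendsto (fun t => Real.exp (-(x * Real.sinh t))) atTop (𝓝 0) :=
      Real.tendsto_exp_neg_atTop_nhds_zero.comp (hsinh.const_mul_atTop hx)
    simpa using this.const_mul (-(1/x))
  have hpos : ∀ t ∈ Ioi (0:ℝ), 0 ≤ Real.cosh t * Real.exp (-x * Real.sinh t) := fun t _ => by
    have := Real.cosh_pos t; positivity
  have hi := integrableOn_Ioi_deriv_of_nonneg (hd 0).continuousAt.continuousWithinAt (fun t _ => hd t) hpos hl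
  have hv := integral_Ioi_of_hasDerivAt_of_tendsto (hd 0).continuousAt.continuousWithinAt (fun t _ => hd t) hi hl
  have hnn : 0 ≤ ∫ t in Ioi (0:ℝ), (Real.sinh t) ^ n * Real.exp (-x * Real.sinh t - ν * t) := by
    refine setIntegral_nonneg measurableSet_Ioi fun t ht => ?_
    have hs : 0 ≤ Real.sinh t := Real.sinh_nonneg_iff.2 (le_of_lt ht)
    positivity
  have hle : ∫ t in Ioi (0:ℝ), (Real.sinh t) ^ n * Real.exp (-x * Real.sinh t - ν * t) ≤ 1 / x := by
    calc _ ≤ ∫ t in Ioi (0:ℝ), Real.cosh t * Real.exp (-x * Real.sinh t) := by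
          refine setIntegral_mono_on (K_int n ν x hν hx) hi measurableSet_Ioi fun t ht => ?_
          have ht' : 0 < t := ht
          have hs : 0 ≤ Real.sinh t := Real.sinh_nonneg_iff.2 (le_of_lt ht)
          have h1 : Real.sinh t ^ n ≤ Real.cosh t := by
            interval_cases n
            · simpa using Real.one_le_cosh t
            · simpa using (Real.sinh_lt_cosh t).le
          have h2 : -x * Real.sinh t - ν * t ≤ -x * Real.sinh t := by nlinarith
          have := Real.cosh_pos t
          gcongr
      _ = 1 / x := by rw [hv]; simp
  rw [norm_mul, Real.norm_of_nonneg hs.le, Real.norm_of_nonneg hnn]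
  calc _ ≤ √x * (1 / x) := by gcongr
    _ = _ := by
        have : √x ^ 2 = x := Real.sq_sqrt hx.le
        field_simp
        rw [this]

lemma J_bdd (ν : ℝ) (hν : 0 < ν) : ∃ K, ∀ x, 0 < x → |besselJ ν x| ≤ K := by
  refine ⟨|1/π| * π + |Real.sin (ν * π) / π| * ∫ t in Ioi (0:ℝ), Real.exp (-ν * t), fun x hx => ?_⟩
  rw [besselJ]
  refine (abs_sub _ _).trans (add_le_add ?_ ?_)
  · rw [abs_mul]
    gcongr
    have := intervalIntegral.norm_integral_le_of_norm_le_const (a := 0) (b := π)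
      (f := fun θ => Real.cos (x * Real.sin θ - ν * θ)) (C := 1) (fun t ht => Real.abs_cos_le_one _)
    simpa [abs_of_pos Real.pi_pos] using this
  · rw [abs_mul]
    gcongr
    rw [abs_of_nonneg (setIntegral_nonneg measurableSet_Ioi fun t ht => (Real.exp_pos _).le)]
    have := K_int 0 ν x hν hx
    simp only [pow_zero, one_mul] at this
    refine setIntegral_mono_on this (exp_neg_integrableOn_Ioi 0 hν) measurableSet_Ioi fun t ht => ?_
    have hs : 0 ≤ Real.sinh t := Real.sinh_nonneg_iff.2 (le_of_lt ht)
    apply Real.exp_le_exp.2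
    nlinarith

theorem J_asymp (ν : ℝ) (hν : 0 < ν) : ∃ μ : ℝ → ℝ, ∃ m0 : ℝ, 0 < m0 ∧
    Tendsto (fun x => μ x ^ 2) atTop (𝓝 m0) ∧
    Tendsto (fun x => √x * besselJ ν x - μ x * Real.cos (x - ν * π / 2 - π / 4)) atTop (𝓝 0) ∧
    Tendsto (fun x => zed ν x / √x + μ x * Real.sin (x - ν * π / 2 - π / 4)) atTop (𝓝 0) := by
  refine ⟨fun x => 2 / π * (fc √x + fs √x), (2/π)^2 * (π/2), by positivity, ?_, ?_, ?_⟩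
  · have := (fres_sum.1.comp Real.tendsto_sqrt_atTop).const_mul ((2/π)^2)
    refine this.congr fun x => ?_
    simp only [Function.comp]; ring
  · have hn : ∀ t, HasDerivAt (fun t : ℝ => ν * t) ν t := fun t => by
      simpa using (hasDerivAt_id t).const_mul ν
    have h := stat_phase (fun t => Real.cos (ν * t)) (fun t => -Real.sin (ν * t) * ν)
      (fun t => -(Real.cos (ν * t) * ν) * ν) (by simp) (by simp) (fun t => (hn t).cos)
      (fun t => (hn t).sin.neg.mul_const ν) (ν * ν) (fun t => by
        rw [abs_mul, abs_neg, abs_mul, abs_of_pos hν]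
        have := Real.abs_cos_le_one (ν * t)
        nlinarith [mul_pos hν hν]) (-(ν * π / 2))
    have h2 := K_decay 0 (by norm_num) ν hν
    have := (h.const_mul (2/π)).sub (h2.const_mul (Real.sin (ν * π) / π))
    simp only [mul_zero, sub_zero] at this
    refine this.congr fun x => ?_
    rw [besselJ, fold0]
    simp only [pow_zero, one_mul, ← sub_eq_add_neg]
    ring
  · have hn : ∀ t, HasDerivAt (fun t : ℝ => ν * t) ν t := fun t => by
      simpa using (hasDerivAt_id t).const_mul ν
    have h := stat_phase (fun t => Real.cos t * Real.cos (ν * t))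
      (fun t => -Real.sin t * Real.cos (ν * t) + Real.cos t * (-Real.sin (ν * t) * ν))
      (fun t => (-Real.cos t * Real.cos (ν * t) + -Real.sin t * (-Real.sin (ν * t) * ν)) +
         (-Real.sin t * (-Real.sin (ν * t) * ν) + Real.cos t * (-(Real.cos (ν * t) * ν) * ν)))
       (by simp) (by simp) (fun t => (Real.hasDerivAt_cos t).mul (hn t).cos)
      (fun t => ((Real.hasDerivAt_sin t).neg.mul (hn t).cos).add
        ((Real.hasDerivAt_cos t).mul ((hn t).sin.neg.mul_const ν))) (1 * 1 + 1 * (1 * ν) + (1 * (1 * ν) + 1 * (1 * ν * ν))) (fun t => by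
        have a1 := Real.abs_cos_le_one (ν * t)
        have a2 := Real.abs_sin_le_one (ν * t)
        have a3 := Real.abs_cos_le_one t
        have a4 := Real.abs_sin_le_one t
        refine (abs_add_le _ _).trans (add_le_add ((abs_add_le _ _).trans (add_le_add ?_ ?_)) ((abs_add_le _ _).trans (add_le_add ?_ ?_)))
        all_goals
          simp only [abs_mul, abs_neg, abs_of_pos hν]
          gcongr) (-(ν * π / 2) + π / 2)
    have h2 := K_decay 1 le_rfl ν hν
    have := (h.const_mul (2/π)).add (h2.const_mul (Real.sin (ν * π) / π))
    simp only [mul_zero, add_zero] at this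
    refine this.congr' ?_
    filter_upwards [eventually_gt_atTop 0] with x hx
    have hs : 0 < √x := Real.sqrt_pos.2 hx
    have sx : x = √x * √x := (Real.mul_self_sqrt hx.le).symm
    have e : zed ν x / √x = √x * (zed ν x / x) := by
      rw [div_eq_iff hs.ne']
      calc zed ν x = (√x * √x) * (zed ν x / x) := by rw [← sx]; field_simp
        _ = _ := by ring
    rw [e, zed, mul_div_cancel_left₀ _ hx.ne', fold1]
    rw [show x + (-(ν * π / 2) + π/2) - π/4 = (x - ν * π / 2 - π / 4) + π/2 by ring, Real.cos_add_pi_div_two]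
    ring

end BZ

namespace BZ
open Filter Topology

lemma anti_of {s : Set ℝ} (hs : Convex ℝ s) {f f' : ℝ → ℝ} (hf : ∀ x ∈ s, HasDerivAt f (f' x) x)
    (h : ∀ x ∈ s, f' x ≤ 0) : AntitoneOn f s :=
  antitoneOn_of_deriv_nonpos hs (fun x hx => (hf x hx).continuousAt.continuousWithinAt)
    (fun x hx => (hf x (interior_subset hx)).differentiableAt.differentiableWithinAt)
    (fun x hx => by rw [(hf x (interior_subset hx)).deriv]; exact h x (interior_subset hx))

lemma mono_of {s : Set ℝ} (hs : Convex ℝ s) {f f' : ℝ → ℝ} (hf : ∀ x ∈ s, HasDerivAt f (f' x) x)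
    (h : ∀ x ∈ s, 0 ≤ f' x) : MonotoneOn f s :=
  monotoneOn_of_deriv_nonneg hs (fun x hx => (hf x hx).continuousAt.continuousWithinAt)
    (fun x hx => (hf x (interior_subset hx)).differentiableAt.differentiableWithinAt)
    (fun x hx => by rw [(hf x (interior_subset hx)).deriv]; exact h x (interior_subset hx))

lemma strictMono_of {s : Set ℝ} (hs : Convex ℝ s) {f f' : ℝ → ℝ} (hf : ∀ x ∈ s, HasDerivAt f (f' x) x)
    (h : ∀ x ∈ s, 0 < f' x) : StrictMonoOn f s :=
  strictMonoOn_of_deriv_pos hs (fun x hx => (hf x hx).continuousAt.continuousWithinAt)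
    (fun x hx => by rw [(hf x (interior_subset hx)).deriv]; exact h x (interior_subset hx))

/-- What we use about the Bessel function y and z, where z is x times the derivative of y. -/
structure Sol (ν : ℝ) (y z : ℝ → ℝ) : Prop where
  pos : 0 < ν
  dy : ∀ x, 0 < x → HasDerivAt y (z x / x) x
  dz : ∀ x, 0 < x → HasDerivAt z (-((x^2 - ν^2) * y x) / x) x
  bdd : ∃ K, ∀ x, 0 < x → |y x| ≤ K
  asymp : ∃ μ : ℝ → ℝ, ∃ m0 : ℝ, 0 < m0 ∧
    Tendsto (fun x => μ x ^ 2) atTop (𝓝 m0) ∧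
    Tendsto (fun x => √x * y x - μ x * Real.cos (x - ν * π / 2 - π / 4)) atTop (𝓝 0) ∧
    Tendsto (fun x => z x / √x + μ x * Real.sin (x - ν * π / 2 - π / 4)) atTop (𝓝 0)

variable {ν : ℝ} {y z : ℝ → ℝ}

lemma Sol.nontriv (S : Sol ν y z) (x0 : ℝ) (hx0 : 0 < x0) : ¬ (y x0 = 0 ∧ z x0 = 0) := by
  rintro ⟨h1, h2⟩
  have hG : ∀ x, 0 < x → HasDerivAt (fun x => -((1 + ν^2) * Real.log x + x^2/2)) (-((1 + ν^2) / x + x)) x := by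
    intro x hx
    have := (((Real.hasDerivAt_log hx.ne').const_mul (1 + ν^2)).add (((hasDerivAt_id x).pow 2).div_const 2)).neg
    exact this.congr_deriv (by simp; ring)
  have hd : ∀ x ∈ Ioi (0:ℝ), HasDerivAt (fun x => (y x ^ 2 + z x ^ 2) * Real.exp (-((1 + ν^2) * Real.log x + x^2/2)))
      (((2 * y x * z x * (1 + ν^2 - x^2) - (1 + ν^2 + x^2) * (y x ^ 2 + z x ^ 2)) / x) * Real.exp (-((1 + ν^2) * Real.log x + x^2/2))) x := by
    intro x hx
    have hx : 0 < x := hx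
    have := ((((S.dy x hx).pow 2).add ((S.dz x hx).pow 2))).mul (hG x hx).exp
    refine this.congr_deriv ?_
    simp
    field_simp
    ring
  have hanti := anti_of (convex_Ioi 0) hd (fun x hx => by
    have hx : 0 < x := hx
    apply mul_nonpos_of_nonpos_of_nonneg _ (Real.exp_pos _).le
    apply div_nonpos_of_nonpos_of_nonneg _ hx.le
    nlinarith [mul_nonneg (by positivity : 0 ≤ 1 + ν^2) (sq_nonneg (y x - z x)), mul_nonneg (sq_nonneg x) (sq_nonneg (y x + z x))])
  have hz : ∀ x, x0 ≤ x → y x = 0 ∧ z x = 0 := by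
    intro x hx
    have := hanti (show x0 ∈ Ioi 0 from hx0) (show x ∈ Ioi 0 from lt_of_lt_of_le hx0 hx) hx
    simp only [h1, h2] at this
    have he := Real.exp_pos (-((1 + ν^2) * Real.log x + x^2/2))
    have h3 : y x ^ 2 + z x ^ 2 ≤ 0 := by
      by_contra hc
      push Not at hc
      have := mul_pos hc he
      linarith
    constructor <;> nlinarith [sq_nonneg (y x), sq_nonneg (z x)]
  obtain ⟨μ, m0, hm0, t1, t2, t3⟩ := S.asymp
  have := (t2.pow 2).add (t3.pow 2)
  have h4 : Tendsto (fun x => μ x ^ 2) atTop (𝓝 (0 ^ 2 + 0 ^ 2)) := by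
    refine this.congr' ?_
    filter_upwards [eventually_ge_atTop x0] with x hx
    obtain ⟨e1, e2⟩ := hz x hx
    rw [e1, e2]
    have := Real.sin_sq_add_cos_sq (x - ν * π / 2 - π / 4)
    linear_combination (μ x ^ 2) * this
  have := tendsto_nhds_unique t1 h4
  simp at this
  linarith

lemma Sol.yz_nonneg (S : Sol ν y z) (a : ℝ) (ha : 0 < a) (hν : a ≤ ν) : 0 ≤ y a * z a := by
  by_contra hc
  push Not at hc
  obtain ⟨K, hK⟩ := S.bdd
  have hm : MonotoneOn (fun x => y x * z x) (Ioc 0 ν) := by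
    refine mono_of (f' := fun x => z x / x * z x + y x * (-((x^2 - ν^2) * y x) / x)) (convex_Ioc 0 ν)
      (fun x hx => (S.dy x hx.1).mul (S.dz x hx.1)) fun x hx => ?_
    have h1 := hx.1
    have : z x / x * z x + y x * (-((x^2 - ν^2) * y x) / x) = (z x ^ 2 + (ν^2 - x^2) * y x ^ 2) / x := by ring
    rw [this]
    have : 0 ≤ ν^2 - x^2 := by nlinarith [hx.2]
    positivity
  set d := -(y a * z a) with hd
  have hd0 : 0 < d := by linarith
  have hanti : AntitoneOn (fun x => y x ^ 2 + 2 * d * Real.log x) (Ioc 0 a) := by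
    refine anti_of (f' := fun x => 2 * y x * (z x / x) + 2 * d * x⁻¹) (convex_Ioc 0 a) (fun x hx => ?_) fun x hx => ?_
    · have := ((S.dy x hx.1).pow 2).add ((Real.hasDerivAt_log hx.1.ne').const_mul (2 * d))
      exact this.congr_deriv (by simp)
    · have h1 := hx.1
      have h2 := hm ⟨hx.1, hx.2.trans hν⟩ ⟨ha, hν⟩ hx.2
      simp only at h2
      have : 2 * y x * (z x / x) + 2 * d * x⁻¹ = 2 * (y x * z x + d) / x := by field_simp
      rw [this]
      apply div_nonpos_of_nonpos_of_nonneg _ h1.le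
      linarith
  set T := K^2 / (2 * d) + 1 with hT
  have hT0 : 0 < T := by positivity
  have hxa : a * Real.exp (-T) ≤ a := by
    have : Real.exp (-T) ≤ 1 := Real.exp_le_one_iff.2 (by linarith)
    nlinarith
  have hx0 : 0 < a * Real.exp (-T) := by positivity
  have h := hanti ⟨hx0, hxa⟩ ⟨ha, le_rfl⟩ hxa
  simp only at h
  rw [Real.log_mul ha.ne' (Real.exp_pos _).ne', Real.log_exp] at h
  have h5 := hK _ hx0
  have h6 : y (a * Real.exp (-T)) ^ 2 ≤ K ^ 2 := by
    rw [← sq_abs]; gcongr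
  have h7 : 2 * d * T = K^2 + 2 * d := by rw [hT]; field_simp
  nlinarith [sq_nonneg (y a)]

lemma Sol.no_zero_left (S : Sol ν y z) (a : ℝ) (ha : 0 < a) (hν : a ≤ ν) : y a ≠ 0 := by
  intro h0
  have hm : MonotoneOn (fun x => y x ^ 2) (Ioc 0 a) := by
    refine mono_of (f' := fun x => 2 * (y x * z x) / x) (convex_Ioc 0 a) (fun x hx => ?_) fun x hx => ?_
    · exact ((S.dy x hx.1).pow 2).congr_deriv (by simp; ring)
    · have := S.yz_nonneg x hx.1 (hx.2.trans hν)
      have := hx.1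
      positivity
  have hz : ∀ x ∈ Ioc 0 a, y x = 0 := fun x hx => by
    have := hm hx ⟨ha, le_rfl⟩ hx.2
    simp only [h0] at this
    nlinarith [sq_nonneg (y x)]
  have hb : 0 < a / 2 := by positivity
  have he : y =ᶠ[𝓝 (a/2)] fun _ => 0 := by
    filter_upwards [Ioo_mem_nhds hb (by linarith : a/2 < a)] with x hx
    exact hz x ⟨hx.1, hx.2.le⟩
  have h1 := (S.dy (a/2) hb).unique ((hasDerivAt_const (a/2) (0:ℝ)).congr_of_eventuallyEq he)
  refine S.nontriv (a/2) hb ⟨hz _ ⟨hb, by linarith⟩, ?_⟩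
  rw [div_eq_zero_iff] at h1
  rcases h1 with h | h
  · exact h
  · exact absurd h hb.ne'

lemma pos_mid (hν : 0 < ν) (dy : ∀ x, 0 < x → HasDerivAt y (z x / x) x)
    (dz : ∀ x, 0 < x → HasDerivAt z (-((x^2 - ν^2) * y x) / x) x)
    (hy : 0 < y ν) (hz : 0 ≤ z ν) (P x0 : ℝ) (hP : 0 ≤ P) (hP2 : x0 ^ 2 - ν ^ 2 ≤ P ^ 2)
    (hlog : P * Real.log (x0 / ν) < π / 2) : ∀ x, ν ≤ x → x ≤ x0 → 0 < y x := by
  by_contra hc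
  push Not at hc
  obtain ⟨x, hx1, hx2, hx3⟩ := hc
  have hyc : ContinuousOn y (Icc ν x0) := fun t ht =>
    (dy t (by linarith [ht.1])).continuousAt.continuousWithinAt
  have hcl : IsCompact (Icc ν x0 ∩ y ⁻¹' Iic 0) :=
    isCompact_Icc.of_isClosed_subset (hyc.preimage_isClosed_of_isClosed isClosed_Icc isClosed_Iic) inter_subset_left
  obtain ⟨b, ⟨hb1, hb2⟩, hb3⟩ := hcl.exists_isLeast ⟨x, ⟨hx1, hx2⟩, hx3⟩
  have hpos : ∀ t ∈ Icc ν b, t ≠ b → 0 < y t := by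
    intro t ht hne
    by_contra h
    push Not at h
    exact hne (le_antisymm ht.2 (hb3 ⟨⟨ht.1, ht.2.trans hb1.2⟩, h⟩))
  have hnn : ∀ t ∈ Icc ν b, 0 ≤ y t := by
    rcases eq_or_lt_of_le hb1.1 with h | h
    · exact absurd hb2 (by rw [← h]; simpa using hy)
    · have hcont : ContinuousOn y (Icc ν b) := hyc.mono (Icc_subset_Icc_right hb1.2)
      have hcl : closure (Ioo ν b) = Icc ν b := closure_Ioo h.ne
      intro t ht
      rcases eq_or_ne t b with rfl | hne
      · have ht' : t ∈ closure (Ioo ν t) := by rw [hcl]; exact ht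
        have := ContinuousWithinAt.closure_le ht' (f := fun _ => (0:ℝ)) (g := y) continuousWithinAt_const
          ((hcont t ht).mono Ioo_subset_Icc_self) (fun u hu => (hpos u ⟨hu.1.le, hu.2.le⟩ hu.2.ne).le)
        exact this
      · exact (hpos t ht hne).le
  have hτ : ∀ t, 0 < t → HasDerivAt (fun t => P * Real.log (t / ν)) (P / t) t := by
    intro t ht
    have h1 : HasDerivAt (fun t => t / ν) (1/ν) t := (hasDerivAt_id t).div_const ν
    have := (h1.log (by positivity)).const_mul P
    exact this.congr_deriv (by field_simp)
  have hang : ∀ t ∈ Icc ν b, 0 < Real.cos (P * Real.log (t / ν)) := by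
    intro t ht
    have t0 : 0 < t := by linarith [ht.1]
    have h1 : 0 ≤ Real.log (t / ν) := Real.log_nonneg (by rw [le_div_iff₀ hν]; linarith [ht.1])
    have h2 : Real.log (t / ν) ≤ Real.log (x0 / ν) := by
      apply Real.log_le_log (by positivity)
      have := ht.2.trans hb1.2
      gcongr
    have h3 : P * Real.log (t / ν) ≤ P * Real.log (x0 / ν) := by gcongr
    have h4 : 0 ≤ P * Real.log (t / ν) := by positivity
    apply Real.cos_pos_of_mem_Ioo
    constructor <;> linarith [Real.pi_pos]
  have hν' : ν ∈ Icc ν b := ⟨le_rfl, hb1.1⟩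
  have hw : ∀ t ∈ Icc ν b, 0 ≤ z t * Real.cos (P * Real.log (t / ν)) + y t * (P * Real.sin (P * Real.log (t / ν))) := by
    have hm : MonotoneOn (fun t => z t * Real.cos (P * Real.log (t / ν)) + y t * (P * Real.sin (P * Real.log (t / ν)))) (Icc ν b) := by
      refine mono_of (f' := fun t => (P^2 - (t^2 - ν^2)) * y t * Real.cos (P * Real.log (t / ν)) / t) (convex_Icc _ _) (fun t ht => ?_) fun t ht => ?_
      · have t0 : 0 < t := by linarith [ht.1]
        have := ((dz t t0).mul (hτ t t0).cos).add ((dy t t0).mul ((hτ t t0).sin.const_mul P))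
        refine this.congr_deriv ?_
        field_simp
        ring
      · have t0 : 0 < t := by linarith [ht.1]
        have h1 := hnn t ht
        have h2 := hang t ht
        have h3 : 0 ≤ P^2 - (t^2 - ν^2) := by
          have := ht.2.trans hb1.2
          nlinarith
        positivity
    intro t ht
    have := hm hν' ht ht.1
    simp only [div_self hν.ne', Real.log_one, mul_zero, Real.cos_zero, Real.sin_zero] at this
    linarith
  have hm2 : MonotoneOn (fun t => y t / Real.cos (P * Real.log (t / ν))) (Icc ν b) := by
    refine mono_of (f' := fun t => (z t * Real.cos (P * Real.log (t / ν)) + y t * (P * Real.sin (P * Real.log (t / ν)))) / (t * Real.cos (P * Real.log (t / ν)) ^ 2)) (convex_Icc _ _) (fun t ht => ?_) fun t ht => ?_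
    · have t0 : 0 < t := by linarith [ht.1]
      have h2 := hang t ht
      have := (dy t t0).div (hτ t t0).cos h2.ne'
      refine this.congr_deriv ?_
      field_simp
      ring
    · have t0 : 0 < t := by linarith [ht.1]
      have h1 := hw t ht
      have h2 := hang t ht
      positivity
  have hbb : b ∈ Icc ν b := ⟨hb1.1, le_rfl⟩
  have := hm2 hν' hbb hb1.1
  simp only [div_self hν.ne', Real.log_one, mul_zero, Real.cos_zero, div_one] at this
  have h3 : y b / Real.cos (P * Real.log (b / ν)) ≤ 0 :=
    div_nonpos_of_nonpos_of_nonneg hb2 (hang b hbb).le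
  linarith

lemma Sol.no_zero (S : Sol ν y z) (P x0 : ℝ) (hP : 0 ≤ P) (hP2 : x0 ^ 2 - ν ^ 2 ≤ P ^ 2)
    (hlog : P * Real.log (x0 / ν) < π / 2) (x : ℝ) (hx : 0 < x) (hx0 : x ≤ x0) : y x ≠ 0 := by
  rcases le_or_gt x ν with h | h
  · exact S.no_zero_left x hx h
  · have h1 := S.no_zero_left ν S.pos le_rfl
    have h2 := S.yz_nonneg ν S.pos le_rfl
    rcases lt_or_gt_of_ne h1 with h3 | h3
    · have := pos_mid (y := fun x => - y x) (z := fun x => - z x) S.pos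
        (fun x hx => (S.dy x hx).neg.congr_deriv (by ring)) (fun x hx => (S.dz x hx).neg.congr_deriv (by ring))
        (by linarith) (by nlinarith) P x0 hP hP2 hlog x h.le hx0
      linarith
    · exact (pos_mid S.pos S.dy S.dz h3 (by nlinarith) P x0 hP hP2 hlog x h.le hx0).ne'

end BZ

namespace BZ
open Filter Topology

noncomputable def rr (ν x : ℝ) : ℝ := √(x ^ 2 - ν ^ 2)
noncomputable def th (ν x : ℝ) : ℝ := rr ν x - ν * Real.arccos (ν / x)
noncomputable def EE (ν x : ℝ) : ℝ := 1 / (4 * rr ν x) + 5 * ν ^ 2 / (12 * rr ν x ^ 3)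
noncomputable def kap (ν x : ℝ) : ℝ := x ^ 2 / (2 * rr ν x ^ 2)
noncomputable def qq (ν x : ℝ) : ℝ := x ^ 2 * (x ^ 2 + 4 * ν ^ 2) / (4 * rr ν x ^ 6)
noncomputable def fA (ν : ℝ) (y : ℝ → ℝ) (x : ℝ) : ℝ := rr ν x * y x
noncomputable def fB (ν : ℝ) (y z : ℝ → ℝ) (x : ℝ) : ℝ := z x + kap ν x * y x
noncomputable def fM (ν : ℝ) (y z : ℝ → ℝ) (x : ℝ) : ℝ := fA ν y x ^ 2 + fB ν y z x ^ 2
noncomputable def fh (ν : ℝ) (y z : ℝ → ℝ) (x : ℝ) : ℝ :=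
  rr ν x * qq ν x * (fA ν y x ^ 2 / fM ν y z x) / x

section
variable {ν x : ℝ}

lemma rr_sq (hν : 0 < ν) (hx : ν < x) : rr ν x ^ 2 = x ^ 2 - ν ^ 2 :=
  Real.sq_sqrt (by nlinarith)

lemma rr_pos (hν : 0 < ν) (hx : ν < x) : 0 < rr ν x :=
  Real.sqrt_pos.2 (by nlinarith)

lemma rr_deriv (hν : 0 < ν) (hx : ν < x) : HasDerivAt (rr ν) (x / rr ν x) x := by
  have h : HasDerivAt (fun x : ℝ => x ^ 2 - ν ^ 2) (2 * x) x := by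
    exact (((hasDerivAt_id x).pow 2).sub_const (ν ^ 2)).congr_deriv (by simp)
  have h2 := h.sqrt (by nlinarith)
  refine h2.congr_deriv ?_
  have := rr_pos hν hx
  change 2 * x / (2 * rr ν x) = x / rr ν x
  field_simp

lemma sqrt_one_sub (hν : 0 < ν) (hx : ν ≤ x) : √(1 - (ν / x) ^ 2) = rr ν x / x := by
  have hx0 : 0 < x := by linarith
  have : 1 - (ν / x) ^ 2 = (x ^ 2 - ν ^ 2) / x ^ 2 := by field_simp
  rw [this, Real.sqrt_div' _ (by positivity), Real.sqrt_sq hx0.le, rr]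

lemma th_deriv (hν : 0 < ν) (hx : ν < x) : HasDerivAt (th ν) (rr ν x / x) x := by
  have hx0 : 0 < x := by linarith
  have hr := rr_pos hν hx
  have h1 : HasDerivAt (fun x => ν / x) (-ν / x ^ 2) x := by
    have := (hasDerivAt_inv hx0.ne').const_mul ν
    exact this.congr_deriv (by ring)
  have hlt : ν / x < 1 := (div_lt_one hx0).2 hx
  have hgt : 0 < ν / x := by positivity
  have h2 := (Real.hasDerivAt_arccos (x := ν / x) (by linarith) (by linarith)).comp x h1
  have h3 := (rr_deriv hν hx).sub (h2.const_mul ν)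
  refine h3.congr_deriv ?_
  rw [sqrt_one_sub hν hx.le]
  have := rr_sq hν hx
  field_simp
  linear_combination -this

lemma EE_deriv (hν : 0 < ν) (hx : ν < x) :
    HasDerivAt (EE ν) (-(rr ν x * qq ν x / x)) x := by
  have hx0 : 0 < x := by linarith
  have hr := rr_pos hν hx
  have h := rr_deriv hν hx
  have h1 := (h.const_mul 4).inv (by positivity)
  have h2 := (((h.pow 3).const_mul 12).inv (by simp; positivity)).const_mul (5 * ν ^ 2)
  have h3 := h1.add h2
  have h4 : EE ν = (fun x => (4 * rr ν x)⁻¹ + 5 * ν ^ 2 * (12 * rr ν x ^ 3)⁻¹) := by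
    funext x; simp [EE, div_eq_mul_inv]
  rw [h4]
  refine h3.congr_deriv ?_
  have := rr_sq hν hx
  simp [qq]
  field_simp
  linear_combination -12 * this

lemma EE_pos (hν : 0 < ν) (hx : ν < x) : 0 < EE ν x := by
  have hr := rr_pos hν hx
  unfold EE; positivity

lemma kap_deriv (hν : 0 < ν) (hx : ν < x) :
    HasDerivAt (kap ν) (-(x * ν ^ 2) / rr ν x ^ 4) x := by
  have hr := rr_pos hν hx
  have h := ((hasDerivAt_id x).pow 2).div (((rr_deriv hν hx).pow 2).const_mul 2) (by simp; positivity)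
  refine h.congr_deriv ?_
  have := rr_sq hν hx
  simp
  field_simp
  linear_combination x * this

variable {y z : ℝ → ℝ}

lemma fA_deriv (S : Sol ν y z) (hx : ν < x) :
    HasDerivAt (fA ν y) ((kap ν x * fA ν y x + rr ν x * fB ν y z x) / x) x := by
  have hν := S.pos
  have hx0 : 0 < x := by linarith
  have hr := rr_pos hν hx
  refine ((rr_deriv hν hx).mul (S.dy x hx0)).congr_deriv ?_
  simp only [fA, fB, kap]
  field_simp
  ring

lemma fB_deriv (S : Sol ν y z) (hx : ν < x) :
    HasDerivAt (fB ν y z) ((kap ν x * fB ν y z x - rr ν x * (1 + qq ν x) * fA ν y x) / x) x := by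
  have hν := S.pos
  have hx0 : 0 < x := by linarith
  have hr := rr_pos hν hx
  refine ((S.dz x hx0).add ((kap_deriv hν hx).mul (S.dy x hx0))).congr_deriv ?_
  have h2 := rr_sq hν hx
  have h4 : x ^ 2 = rr ν x ^ 2 + ν ^ 2 := by linarith
  simp only [fA, fB, kap, qq]
  rw [← h2]
  field_simp
  ring

lemma fM_pos (S : Sol ν y z) (hx : ν < x) : 0 < fM ν y z x := by
  have hν := S.pos
  have hr := rr_pos hν hx
  by_contra hc
  push Not at hc
  unfold fM at hc
  have h1 : fA ν y x = 0 := by nlinarith [sq_nonneg (fA ν y x), sq_nonneg (fB ν y z x)]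
  have h2 : fB ν y z x = 0 := by nlinarith [sq_nonneg (fA ν y x), sq_nonneg (fB ν y z x)]
  have h3 : y x = 0 := by
    rcases mul_eq_zero.1 h1 with h | h
    · exact absurd h hr.ne'
    · exact h
  refine S.nontriv x (by linarith) ⟨h3, ?_⟩
  simpa [fB, h3] using h2

lemma fh_bounds (S : Sol ν y z) (hx : ν < x) :
    0 ≤ fh ν y z x ∧ fh ν y z x ≤ rr ν x * qq ν x / x := by
  have hν := S.pos
  have hx0 : 0 < x := by linarith
  have hr := rr_pos hν hx
  have hM := fM_pos S hx
  have hq : 0 ≤ qq ν x := by unfold qq; positivity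
  have h1 : fA ν y x ^ 2 / fM ν y z x ≤ 1 := by
    rw [div_le_one hM]; unfold fM; nlinarith [sq_nonneg (fB ν y z x)]
  refine ⟨by unfold fh; positivity, ?_⟩
  unfold fh
  exact div_le_div_of_nonneg_right (mul_le_of_le_one_right (by positivity) h1) hx0.le

lemma fh_cont (S : Sol ν y z) : ContinuousOn (fh ν y z) (Ioi ν) := by
  intro x hx
  have hx : ν < x := hx
  have hν := S.pos
  have hr := rr_pos hν hx
  have c1 := (rr_deriv hν hx).continuousAt
  have c2 := (fA_deriv S hx).continuousAt
  have c3 := (fB_deriv S hx).continuousAt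
  have cM : ContinuousAt (fM ν y z) x := (c2.pow 2).add (c3.pow 2)
  have cq : ContinuousAt (qq ν) x := by
    unfold qq
    refine ContinuousAt.div (by fun_prop) (by fun_prop) (by positivity)
  exact (((c1.mul cq).mul ((c2.pow 2).div cM (fM_pos S hx).ne')).div continuousAt_id
    (by simp; linarith)).continuousWithinAt

end

lemma exists_err {ν : ℝ} {h E E' : ℝ → ℝ} (hc : ContinuousOn h (Ioi ν))
    (h0 : ∀ x, ν < x → 0 ≤ h x ∧ h x ≤ E' x) (hE : ∀ x, ν < x → HasDerivAt E (-E' x) x)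
    (hE0 : ∀ x, ν < x → 0 ≤ E x) (hElim : Tendsto E atTop (𝓝 0)) :
    ∃ err : ℝ → ℝ, ∀ x, ν < x → HasDerivAt err (-h x) x ∧ 0 ≤ err x ∧ err x ≤ E x := by
  set a := ν + 1 with ha
  have ha' : ν < a := by linarith
  set H : ℝ → ℝ := fun x => ∫ t in a..x, h t with hH
  have hd : ∀ x, ν < x → HasDerivAt H (h x) x := by
    intro x hx
    have hsub : uIcc a x ⊆ Ioi ν := by
      intro t ht
      rw [mem_uIcc] at ht
      rcases ht with ht | ht <;> simp only [mem_Ioi] <;> linarith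
    refine intervalIntegral.integral_hasDerivAt_right ((hc.mono hsub).intervalIntegrable)
      (hc.stronglyMeasurableAtFilter isOpen_Ioi x hx) (hc.continuousAt (Ioi_mem_nhds hx))
  have hmono : MonotoneOn H (Ioi ν) := mono_of (convex_Ioi ν) hd fun x hx => (h0 x hx).1
  have hanti : AntitoneOn (fun x => H x + E x) (Ioi ν) := by
    refine anti_of (convex_Ioi ν) (fun x hx => (hd x hx).add (hE x hx)) fun x hx => ?_
    linarith [(h0 x hx).2]
  have hmono' : Monotone (fun x => H (max x a)) := fun s t hst =>
    hmono (lt_of_lt_of_le ha' (le_max_right _ _)) (lt_of_lt_of_le ha' (le_max_right _ _))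
      (max_le_max_right a hst)
  have hbd : BddAbove (range fun x => H (max x a)) := by
    refine ⟨H a + E a, ?_⟩
    rintro _ ⟨x, rfl⟩
    have h1 : ν < max x a := lt_of_lt_of_le ha' (le_max_right _ _)
    have := hanti (show a ∈ Ioi ν from ha') h1 (le_max_right _ _)
    simp only at this ⊢
    linarith [hE0 _ h1]
  have hlim := tendsto_atTop_ciSup hmono' hbd
  set L := ⨆ x, H (max x a) with hL
  have hlim2 : Tendsto H atTop (𝓝 L) := by
    refine hlim.congr' ?_
    filter_upwards [eventually_ge_atTop a] with x hx
    rw [max_eq_left hx]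
  refine ⟨fun x => L - H x, fun x hx => ⟨?_, ?_, ?_⟩⟩
  · exact ((hd x hx).const_sub L)
  · have : H x ≤ L := by
      refine ge_of_tendsto hlim2 ?_
      filter_upwards [eventually_ge_atTop x] with t ht
      exact hmono hx (lt_of_lt_of_le hx ht) ht
    simpa using this
  · have : L + 0 ≤ H x + E x := by
      refine le_of_tendsto (hlim2.add hElim) ?_
      filter_upwards [eventually_ge_atTop x] with t ht
      exact hanti hx (lt_of_lt_of_le hx ht) ht
    simp only; linarith

end BZ

namespace BZ
open Filter Topology

lemma tz_mul {f g : ℝ → ℝ} {K : ℝ} (hf : Tendsto f atTop (𝓝 0)) (hg : ∀ᶠ x in atTop, |g x| ≤ K) :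
    Tendsto (fun x => f x * g x) atTop (𝓝 0) := by
  have h1 : Tendsto (fun x => |f x| * K) atTop (𝓝 0) := by
    simpa using hf.abs.mul_const K
  refine squeeze_zero_norm' ?_ h1
  filter_upwards [hg] with x hx
  rw [Real.norm_eq_abs, abs_mul]
  gcongr

section
variable {ν : ℝ}

lemma x_sub_rr (hν : 0 < ν) : Tendsto (fun x => rr ν x - x) atTop (𝓝 0) := by
  have h1 : Tendsto (fun x : ℝ => ν ^ 2 * x⁻¹) atTop (𝓝 0) := by
    simpa using tendsto_inv_atTop_zero.const_mul (ν ^ 2)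
  refine squeeze_zero_norm' ?_ h1
  filter_upwards [eventually_gt_atTop ν] with x hx
  have hx0 : 0 < x := by linarith
  have hr := rr_pos hν hx
  have h2 := rr_sq hν hx
  have h3 : rr ν x ≤ x := by nlinarith
  rw [Real.norm_eq_abs, abs_of_nonpos (by linarith), ← div_eq_mul_inv, le_div_iff₀ hx0]
  nlinarith

lemma rr_div (hν : 0 < ν) : Tendsto (fun x => rr ν x / x - 1) atTop (𝓝 0) := by
  have := (x_sub_rr hν).mul tendsto_inv_atTop_zero
  rw [mul_zero] at this
  refine this.congr' ?_
  filter_upwards [eventually_gt_atTop 0] with x hx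
  field_simp

lemma rr_atTop (hν : 0 < ν) : Tendsto (rr ν) atTop atTop := by
  have := (x_sub_rr hν).add_atTop tendsto_id
  simpa using this

lemma EE_lim (hν : 0 < ν) : Tendsto (EE ν) atTop (𝓝 0) := by
  have h1 := tendsto_inv_atTop_zero.comp (rr_atTop hν)
  have h2 := (h1.const_mul (1/4)).add ((h1.pow 3).const_mul (5 * ν ^ 2 / 12))
  refine (h2.congr fun x => ?_).trans (by simp)
  simp [EE]
  ring

lemma kap_lim (hν : 0 < ν) : Tendsto (fun x => kap ν x / x) atTop (𝓝 0) := by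
  have h1 := (rr_div hν).add_const 1
  have h2 := (h1.inv₀ (by simp)).pow 2
  have h3 := (h2.mul tendsto_inv_atTop_zero).const_mul (1/2)
  refine (h3.congr' ?_).trans (by simp)
  filter_upwards [eventually_gt_atTop ν] with x hx
  have hx0 : 0 < x := by linarith
  have hr := rr_pos hν hx
  simp [kap]
  field_simp

lemma th_lim (hν : 0 < ν) : Tendsto (fun x => th ν x - (x - ν * π / 2)) atTop (𝓝 0) := by
  have h1 : Tendsto (fun x : ℝ => ν / x) atTop (𝓝 0) := by
    simpa [div_eq_mul_inv] using tendsto_inv_atTop_zero.const_mul ν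
  have h2 := (Real.continuous_arccos.tendsto 0).comp h1
  have h3 := (x_sub_rr hν).sub ((h2.sub_const (π / 2)).const_mul ν)
  refine (h3.congr fun x => ?_).trans (by simp)
  simp [th]
  ring

end

section
variable {ν : ℝ} {y z : ℝ → ℝ}

/-- Existence of the phase function. -/
lemma phase (S : Sol ν y z) : ∃ err : ℝ → ℝ,
    (∀ x, ν < x → HasDerivAt err (-fh ν y z x) x ∧ 0 ≤ err x ∧ err x ≤ EE ν x) ∧
    ∀ x, ν < x → fA ν y x * Real.cos (th ν x + π / 4 - err x) =
      fB ν y z x * Real.sin (th ν x + π / 4 - err x) := by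
  have hν := S.pos
  obtain ⟨err, he⟩ := exists_err (h := fh ν y z) (E := EE ν) (E' := fun x => rr ν x * qq ν x / x)
    (fh_cont S) (fun x hx => fh_bounds S hx) (fun x hx => EE_deriv hν hx)
    (fun x hx => (EE_pos hν hx).le) (EE_lim hν)
  refine ⟨err, he, ?_⟩
  set Φ : ℝ → ℝ := fun x => th ν x + π / 4 - err x with hΦ
  have dΦ : ∀ x, ν < x → HasDerivAt Φ (rr ν x / x + fh ν y z x) x := fun x hx =>
    ((((th_deriv hν hx).add_const (π / 4))).sub (he x hx).1).congr_deriv (by ring)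
  set N : ℝ → ℝ := fun x => fA ν y x * Real.cos (Φ x) - fB ν y z x * Real.sin (Φ x) with hN
  set W : ℝ → ℝ := fun x => N x ^ 2 / fM ν y z x with hW
  have dW : ∀ x, ν < x → HasDerivAt W 0 x := by
    intro x hx
    have hx0 : 0 < x := by linarith
    have hM := fM_pos S hx
    have a := fA_deriv S hx
    have b := fB_deriv S hx
    have p := dΦ x hx
    have n := (a.mul p.cos).sub (b.mul p.sin)
    have m := (a.pow 2).add (b.pow 2)
    have w := (n.pow 2).div m hM.ne'
    refine w.congr_deriv ?_
    have hMe : fM ν y z x = fA ν y x ^ 2 + fB ν y z x ^ 2 := rfl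
    simp only [fh, Pi.sub_apply, Pi.mul_apply, Pi.pow_apply, Pi.add_apply]
    rw [hMe] at hM ⊢
    generalize fA ν y x = A at *
    generalize fB ν y z x = B at *
    generalize kap ν x = κ at *
    generalize qq ν x = q at *
    generalize rr ν x = r at *
    generalize Real.cos (Φ x) = c at *
    generalize Real.sin (Φ x) = s at *
    field_simp
    ring
  obtain ⟨μ, m0, hm0, t1, t2, t3⟩ := S.asymp
  -- boundedness
  have bμ : ∀ᶠ x in atTop, |μ x| ≤ m0 + 2 := by
    filter_upwards [t1.eventually (gt_mem_nhds (by linarith : m0 < m0 + 1))] with x hx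
    rw [abs_le]
    constructor <;> nlinarith
  set u : ℝ → ℝ := fun x => √x * y x with hu
  set v : ℝ → ℝ := fun x => z x / √x with hv
  set ω : ℝ → ℝ := fun x => x - ν * π / 2 - π / 4 with hω
  set e1 : ℝ → ℝ := fun x => u x - μ x * Real.cos (ω x) with he1
  set e2 : ℝ → ℝ := fun x => v x + μ x * Real.sin (ω x) with he2
  have t2 : Tendsto e1 atTop (𝓝 0) := t2
  have t3 : Tendsto e2 atTop (𝓝 0) := t3
  have small : ∀ {e : ℝ → ℝ}, Tendsto e atTop (𝓝 0) → ∀ᶠ x in atTop, |e x| ≤ 1 := by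
    intro e h
    have := h.abs
    rw [abs_zero] at this
    filter_upwards [this.eventually (gt_mem_nhds (by norm_num : (0:ℝ) < 1))] with x hx using hx.le
  have bu : ∀ᶠ x in atTop, |u x| ≤ m0 + 3 := by
    filter_upwards [bμ, small t2] with x h1 h2
    have h3 : u x = μ x * Real.cos (ω x) + e1 x := by simp [he1]
    rw [h3]
    have h4 : |μ x * Real.cos (ω x)| ≤ |μ x| := by
      rw [abs_mul]; exact mul_le_of_le_one_right (abs_nonneg _) (Real.abs_cos_le_one _)
    linarith [abs_add_le (μ x * Real.cos (ω x)) (e1 x)]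
  have bv : ∀ᶠ x in atTop, |v x| ≤ m0 + 3 := by
    filter_upwards [bμ, small t3] with x h1 h2
    have h3 : v x = e2 x - μ x * Real.sin (ω x) := by simp [he2]
    rw [h3]
    have h4 : |μ x * Real.sin (ω x)| ≤ |μ x| := by
      rw [abs_mul]; exact mul_le_of_le_one_right (abs_nonneg _) (Real.abs_sin_le_one _)
    linarith [abs_sub (e2 x) (μ x * Real.sin (ω x))]
  have bmul : ∀ {f g : ℝ → ℝ} {K L : ℝ}, (∀ᶠ x in atTop, |f x| ≤ K) → (∀ᶠ x in atTop, |g x| ≤ L) →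
      ∀ᶠ x in atTop, |f x * g x| ≤ K * L := by
    intro f g K L h1 h2
    filter_upwards [h1, h2] with x a b
    rw [abs_mul]
    exact mul_le_mul a b (abs_nonneg _) ((abs_nonneg _).trans a)
  have bcos : ∀ f : ℝ → ℝ, ∀ᶠ x in atTop, |Real.cos (f x)| ≤ 1 := fun f =>
    Eventually.of_forall fun x => Real.abs_cos_le_one _
  have bsin : ∀ f : ℝ → ℝ, ∀ᶠ x in atTop, |Real.sin (f x)| ≤ 1 := fun f =>
    Eventually.of_forall fun x => Real.abs_sin_le_one _
  have herr : Tendsto err atTop (𝓝 0) := by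
    refine squeeze_zero' ?_ ?_ (EE_lim hν)
    · filter_upwards [eventually_gt_atTop ν] with x hx using (he x hx).2.1
    · filter_upwards [eventually_gt_atTop ν] with x hx using (he x hx).2.2
  set δ : ℝ → ℝ := fun x => Φ x - (ω x + π / 2) with hδ
  have tδ : Tendsto δ atTop (𝓝 0) := by
    have := (th_lim hν).sub herr
    refine (this.congr fun x => ?_).trans (by simp)
    simp [hδ, hΦ, hω]
    ring
  have tsd : Tendsto (fun x => Real.sin (δ x)) atTop (𝓝 0) := by
    have := (Real.continuous_sin.tendsto 0).comp tδ
    rw [Real.sin_zero] at this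
    exact this
  have tκ := kap_lim hν
  have tr := rr_div hν
  -- N / sqrt x
  have tN : Tendsto (fun x => N x / √x) atTop (𝓝 0) := by
    have a1 := tz_mul tsd bμ
    have a2 := tz_mul t2 (bcos Φ)
    have a3 := tz_mul t3 (bsin Φ)
    have a4 := tz_mul tr (bmul bu (bcos Φ))
    have a5 := tz_mul tκ (bmul bu (bsin Φ))
    have := (((a1.neg.add a2).sub a3).add a4).sub a5
    refine (this.congr' ?_).trans (by simp)
    filter_upwards [eventually_gt_atTop ν] with x hx
    have hx0 : 0 < x := by linarith
    have hs : 0 < √x := Real.sqrt_pos.2 hx0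
    have hss : √x ^ 2 = x := Real.sq_sqrt hx0.le
    have hd : Real.sin (δ x) = -(Real.cos (ω x) * Real.cos (Φ x)) - Real.sin (ω x) * Real.sin (Φ x) + 0 := by
      simp only [hδ]
      rw [← sub_sub, Real.sin_sub_pi_div_two, Real.cos_sub]
      ring
    have hN' : N x / √x = rr ν x / x * u x * Real.cos (Φ x) - (v x + kap ν x / x * u x) * Real.sin (Φ x) := by
      simp only [hN, hu, hv, fA, fB]
      field_simp
      rw [hss]
      field_simp
      try ring
    rw [hN', hd]
    simp only [he1, he2]
    ring
  have tM : Tendsto (fun x => fM ν y z x / x) atTop (𝓝 m0) := by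
    have a1 := tz_mul t2 (bmul bμ (bcos ω))
    have a2 := tz_mul t3 (bmul bμ (bsin ω))
    have a3 := (t2.pow 2).add (t3.pow 2)
    have a4 := tz_mul tr (bmul bu bu)
    have a5 := tz_mul (tr.pow 2 |>.trans (by simp)) (bmul bu bu)
    have a6 := tz_mul tκ (bmul bu bv)
    have a7 := tz_mul (tκ.pow 2 |>.trans (by simp)) (bmul bu bu)
    have := ((((((t1.add (a1.const_mul 2)).sub (a2.const_mul 2)).add a3).add (a4.const_mul 2)).add a5).add
      (a6.const_mul 2)).add a7
    refine (this.congr' ?_).trans (by simp)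
    filter_upwards [eventually_gt_atTop ν] with x hx
    have hx0 : 0 < x := by linarith
    have hs : 0 < √x := Real.sqrt_pos.2 hx0
    have hss : √x ^ 2 = x := Real.sq_sqrt hx0.le
    have hM' : fM ν y z x / x = (rr ν x / x * u x) ^ 2 + (v x + kap ν x / x * u x) ^ 2 := by
      have e1 : rr ν x / x * u x = fA ν y x / √x := by
        simp only [hu, fA]; field_simp; rw [hss]; try ring
      have e2 : v x + kap ν x / x * u x = fB ν y z x / √x := by
        simp only [hu, hv, fB]; field_simp; rw [hss]; try ring
      rw [e1, e2, div_pow, div_pow, hss, ← add_div]; rfl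
    rw [hM']
    simp only [he1, he2]
    have := Real.sin_sq_add_cos_sq (ω x)
    linear_combination (-μ x ^ 2) * this
  have tW : Tendsto W atTop (𝓝 0) := by
    have := (tN.pow 2).div tM hm0.ne'
    refine (this.congr' ?_).trans (by simp)
    filter_upwards [eventually_gt_atTop ν] with x hx
    have hx0 : 0 < x := by linarith
    have hM := fM_pos S hx
    simp only [Pi.div_apply, div_pow, hW, Real.sq_sqrt hx0.le]
    field_simp
  intro x hx
  have hc : ∀ t, x ≤ t → W t = W x := by
    intro t ht
    have m1 := mono_of (convex_Ioi ν) dW (fun _ _ => le_rfl)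
    have m2 := anti_of (convex_Ioi ν) dW (fun _ _ => le_rfl)
    have ht' : t ∈ Ioi ν := lt_of_lt_of_le hx ht
    exact le_antisymm (m2 hx ht' ht) (m1 hx ht' ht)
  have h0 : W x = 0 := by
    refine tendsto_nhds_unique (tendsto_const_nhds.congr' ?_) tW
    filter_upwards [eventually_ge_atTop x] with t ht using (hc t ht).symm
  have hM := fM_pos S hx
  have h1 : N x = 0 := by
    simp only [hW] at h0
    rw [div_eq_zero_iff] at h0
    rcases h0 with h | h
    · exact pow_eq_zero_iff (two_ne_zero) |>.1 h
    · exact absurd h hM.ne'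
  simp only [hN] at h1
  linarith

end

end BZ

namespace BZ
open Filter Topology

section
variable {ν : ℝ}

lemma th_cont (hν : 0 < ν) : ContinuousOn (th ν) (Ici ν) := by
  have h1 : ContinuousOn (fun x => ν / x) (Ici ν) :=
    continuousOn_const.div continuousOn_id (fun x hx => by
      have : ν ≤ x := hx
      simp; linarith)
  have h2 : Continuous (rr ν) := by unfold rr; fun_prop
  exact h2.continuousOn.sub ((Real.continuous_arccos.comp_continuousOn h1).const_smul ν)

lemma th_self (hν : 0 < ν) : th ν ν = 0 := by
  simp [th, rr, div_self hν.ne']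

lemma th_mono (hν : 0 < ν) : StrictMonoOn (th ν) (Ici ν) := by
  refine strictMonoOn_of_deriv_pos (convex_Ici ν) (th_cont hν) fun x hx => ?_
  rw [interior_Ici] at hx
  have hx : ν < x := hx
  rw [(th_deriv hν hx).deriv]
  have := rr_pos hν hx
  have : 0 < x := by linarith
  positivity

lemma th_le (hν : 0 < ν) {x : ℝ} (hx : ν ≤ x) : th ν x ≤ rr ν x ^ 3 / (3 * ν ^ 2) := by
  have h2 : Continuous (rr ν) := by unfold rr; fun_prop
  have hd : ∀ x, ν < x → HasDerivAt (fun x => rr ν x ^ 3 / (3 * ν ^ 2) - th ν x)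
      (rr ν x * x / ν ^ 2 - rr ν x / x) x := by
    intro x hx
    have hr := rr_pos hν hx
    refine ((((rr_deriv hν hx).pow 3).div_const (3 * ν ^ 2)).sub (th_deriv hν hx)).congr_deriv ?_
    simp
    field_simp
  have hm : MonotoneOn (fun x => rr ν x ^ 3 / (3 * ν ^ 2) - th ν x) (Ici ν) := by
    refine monotoneOn_of_deriv_nonneg (convex_Ici ν) ?_ ?_ ?_
    · exact ContinuousOn.sub (by fun_prop) (th_cont hν)
    · intro x hx
      rw [interior_Ici] at hx
      exact (hd x hx).differentiableAt.differentiableWithinAt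
    · intro x hx
      rw [interior_Ici] at hx
      have hx : ν < x := hx
      have hx0 : 0 < x := by linarith
      have hr := rr_pos hν hx
      rw [(hd x hx).deriv]
      have : rr ν x * x / ν ^ 2 - rr ν x / x = rr ν x * (x ^ 2 - ν ^ 2) / (ν ^ 2 * x) := by
        field_simp
      rw [this]
      have : 0 ≤ x ^ 2 - ν ^ 2 := by nlinarith
      positivity
  have := hm (self_mem_Ici) hx hx
  simp only [th_self hν] at this
  have h0 : rr ν ν = 0 := by simp [rr]
  rw [h0] at this
  simp at this
  linarith

lemma g_eq (hν : 0 < ν) {x : ℝ} (hx : ν ≤ x) : x * gfun (ν / x) * π = th ν x := by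
  have hx0 : 0 < x := by linarith
  rw [gfun, sqrt_one_sub hν hx, th]
  have := Real.pi_pos
  field_simp

end

lemma core {ν : ℝ} {y z : ℝ → ℝ} (S : Sol ν y z) (h1 : 1 < ν) {j : ℝ} {k : ℕ} (hk : 1 ≤ k)
    (hj0 : 0 < j) (hj : y j = 0) (hcard : {x : ℝ | 0 < x ∧ x < j ∧ y x = 0}.ncard = k - 1) :
    ν < j ∧ ∃ e, 0 ≤ e ∧ e ≤ EE ν j ∧ th ν j = ((k : ℝ) - 1 / 4) * π + e := by
  have hν := S.pos
  have hpi := Real.pi_gt_three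
  have hpi' := Real.pi_gt_d2
  obtain ⟨err, he, hAB⟩ := phase S
  set Φ : ℝ → ℝ := fun x => th ν x + π / 4 - err x with hΦ
  have dΦ : ∀ x, ν < x → HasDerivAt Φ (rr ν x / x + fh ν y z x) x := fun x hx =>
    ((((th_deriv hν hx).add_const (π / 4))).sub (he x hx).1).congr_deriv (by ring)
  have mΦ : StrictMonoOn Φ (Ioi ν) := strictMono_of (convex_Ioi ν) dΦ fun x hx => by
    have hx : ν < x := hx
    have := rr_pos hν hx
    have := (fh_bounds S hx).1
    have : 0 < x := by linarith
    positivity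
  have hiff : ∀ x, ν < x → (y x = 0 ↔ Real.sin (Φ x) = 0) := by
    intro x hx
    have h := hAB x hx
    change fA ν y x * Real.cos (Φ x) = fB ν y z x * Real.sin (Φ x) at h
    have hM := fM_pos S hx
    have hr := rr_pos hν hx
    constructor
    · intro hy
      have hA : fA ν y x = 0 := by simp [fA, hy]
      rw [hA, zero_mul] at h
      rcases mul_eq_zero.1 h.symm with h' | h'
      · simp [fM, hA, h'] at hM
      · exact h'
    · intro hs
      rw [hs, mul_zero] at h
      have hc : Real.cos (Φ x) ≠ 0 := by
        intro hc
        have := Real.sin_sq_add_cos_sq (Φ x)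
        rw [hs, hc] at this
        norm_num at this
      rcases mul_eq_zero.1 h with h' | h'
      · rcases mul_eq_zero.1 h' with h'' | h''
        · exact absurd h'' hr.ne'
        · exact h''
      · exact absurd h' hc
  set ρ : ℝ := ν ^ ((2:ℝ)/3) with hρ
  have hρ3 : ρ ^ 3 = ν ^ 2 := by
    rw [hρ, ← Real.rpow_natCast, ← Real.rpow_mul hν.le, ← Real.rpow_natCast]
    norm_num
  have hρ1 : 1 ≤ ρ := Real.one_le_rpow h1.le (by norm_num)
  set x0 : ℝ := √(ν ^ 2 + ρ ^ 2) with hx0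
  have hx0s : x0 ^ 2 = ν ^ 2 + ρ ^ 2 := Real.sq_sqrt (by positivity)
  have hx0p : 0 < x0 := Real.sqrt_pos.2 (by positivity)
  have hx0ν : ν < x0 := by nlinarith
  have hr0 : rr ν x0 = ρ := by
    rw [rr, hx0s, add_sub_cancel_left, Real.sqrt_sq (by linarith)]
  have hno : ∀ x, 0 < x → x ≤ x0 → y x ≠ 0 := by
    refine S.no_zero ρ x0 (by linarith) (by linarith) ?_
    have hl := Real.log_le_sub_one_of_pos (show 0 < x0 / ν by positivity)
    have h3 : ρ * (x0 / ν - 1) ≤ 1 / 2 := by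
      have h4 : x0 ≤ ν + ρ ^ 2 / (2 * ν) := by
        rw [hx0]
        apply Real.sqrt_le_iff.2
        refine ⟨by positivity, ?_⟩
        have : (ν + ρ ^ 2 / (2 * ν)) ^ 2 = ν ^ 2 + ρ ^ 2 + (ρ ^ 2 / (2 * ν)) ^ 2 := by
          field_simp; ring
        rw [this]
        nlinarith [sq_nonneg (ρ ^ 2 / (2 * ν))]
      have h5 : x0 / ν - 1 ≤ ρ ^ 2 / (2 * ν ^ 2) := by
        have : x0 / ν - 1 = (x0 - ν) / ν := by field_simp
        rw [this, div_le_iff₀ hν]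
        have : ρ ^ 2 / (2 * ν ^ 2) * ν = ρ ^ 2 / (2 * ν) := by field_simp
        linarith
      have h6 : ρ * (ρ ^ 2 / (2 * ν ^ 2)) = 1 / 2 := by
        have : ρ * (ρ ^ 2 / (2 * ν ^ 2)) = ρ ^ 3 / (2 * ν ^ 2) := by ring
        rw [this, hρ3]; field_simp
      rw [← h6]
      gcongr
    have : ρ * Real.log (x0 / ν) ≤ ρ * (x0 / ν - 1) := by gcongr
    linarith
  have hΦ0 : 0 < Φ x0 ∧ Φ x0 < π := by
    have hE : EE ν x0 ≤ 2 / 3 := by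
      rw [EE, hr0, hρ3]
      have a1 : 5 * ν ^ 2 / (12 * ν ^ 2) = 5 / 12 := by field_simp
      have a2 : 1 / (4 * ρ) ≤ 1 / 4 := by
        apply one_div_le_one_div_of_le (by norm_num); linarith
      linarith
    have hth := th_le hν hx0ν.le
    rw [hr0, hρ3] at hth
    have a1 : ν ^ 2 / (3 * ν ^ 2) = 1 / 3 := by field_simp
    rw [a1] at hth
    have hth0 : 0 < th ν x0 := by
      rw [← th_self hν]
      exact th_mono hν self_mem_Ici hx0ν.le hx0ν
    have := he x0 hx0ν
    simp only [hΦ]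
    constructor <;> linarith [this.2.1, this.2.2]
  have hjx0 : x0 < j := by
    by_contra hc
    push Not at hc
    exact hno j hj0 hc hj
  have hνj : ν < j := by linarith
  obtain ⟨n, hn⟩ := Real.sin_eq_zero_iff.1 ((hiff j hνj).1 hj)
  have hΦj : Φ x0 < Φ j := mΦ hx0ν hνj hjx0
  have hn0 : 0 < n := by
    have : 0 < (n : ℝ) * π := by rw [hn]; linarith
    have : (0:ℝ) < n := pos_of_mul_pos_left this Real.pi_pos.le
    exact_mod_cast this
  obtain ⟨n, rfl⟩ := Int.eq_ofNat_of_zero_le hn0.le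
  simp only [Int.cast_natCast] at hn
  have hn0 : 1 ≤ n := by
    have : (0:ℤ) < (n:ℤ) := hn0
    omega
  have himg : Φ '' {x : ℝ | 0 < x ∧ x < j ∧ y x = 0} = (fun i : ℕ => (i : ℝ) * π) '' (Finset.Ico 1 n : Finset ℕ) := by
    ext t
    constructor
    · rintro ⟨x, ⟨hx1, hx2, hx3⟩, rfl⟩
      have hxx : x0 < x := by
        by_contra hc
        push Not at hc
        exact hno x hx1 hc hx3
      have hxν : ν < x := by linarith
      obtain ⟨m, hm⟩ := Real.sin_eq_zero_iff.1 ((hiff x hxν).1 hx3)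
      have b1 : Φ x0 < Φ x := mΦ hx0ν hxν hxx
      have b2 : Φ x < Φ j := mΦ hxν hνj hx2
      have hm0 : 0 < m := by
        have : 0 < (m : ℝ) * π := by rw [hm]; linarith
        have : (0:ℝ) < m := pos_of_mul_pos_left this Real.pi_pos.le
        exact_mod_cast this
      obtain ⟨m, rfl⟩ := Int.eq_ofNat_of_zero_le hm0.le
      simp only [Int.cast_natCast] at hm
      have hmn : m < n := by
        rw [← hm, ← hn] at b2
        have := lt_of_mul_lt_mul_right b2 Real.pi_pos.le
        exact_mod_cast this
      refine ⟨m, ?_, hm⟩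
      simp only [Finset.coe_Ico, mem_Ico]
      omega
    · rintro ⟨i, hi, rfl⟩
      simp only [Finset.coe_Ico, mem_Ico] at hi
      have i1 : (1:ℝ) ≤ i := by exact_mod_cast hi.1
      have i2 : (i:ℝ) < n := by exact_mod_cast hi.2
      have hlt : (i:ℝ) * π < Φ j := by rw [← hn]; gcongr
      have hgt : Φ x0 < (i:ℝ) * π := by nlinarith [hΦ0.2]
      have hcont : ContinuousOn Φ (Icc x0 j) := fun x hx =>
        (dΦ x (by linarith [hx.1])).continuousAt.continuousWithinAt
      obtain ⟨x, hx, hxe⟩ := intermediate_value_Icc hjx0.le hcont ⟨hgt.le, hlt.le⟩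
      refine ⟨x, ⟨by linarith [hx.1], ?_, ?_⟩, hxe⟩
      · refine lt_of_le_of_ne hx.2 ?_
        rintro rfl
        linarith
      · rw [hiff x (by linarith [hx.1]), hxe]
        exact Real.sin_nat_mul_pi i
  have hinj : InjOn Φ {x : ℝ | 0 < x ∧ x < j ∧ y x = 0} := by
    have hsub : {x : ℝ | 0 < x ∧ x < j ∧ y x = 0} ⊆ Ioi ν := by
      rintro x ⟨hx1, hx2, hx3⟩
      have hxx : x0 < x := by
        by_contra hc
        push Not at hc
        exact hno x hx1 hc hx3
      exact hx0ν.trans hxx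
    exact mΦ.injOn.mono hsub
  have hc1 := hinj.ncard_image
  rw [himg, Set.ncard_image_of_injective _ (fun a b hab => by
    have := mul_right_cancel₀ Real.pi_pos.ne' hab
    exact_mod_cast this), Set.ncard_coe_finset, Nat.card_Ico, hcard] at hc1
  have hnk : n = k := by omega
  subst hnk
  refine ⟨hνj, err j, (he j hνj).2.1, (he j hνj).2.2, ?_⟩
  simp only [hΦ] at hn
  linarith

lemma final {ν : ℝ} {y z : ℝ → ℝ} (S : Sol ν y z) (h1 : 1 < ν) {j : ℝ} {k : ℕ} (hk : 1 ≤ k)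
    (hj0 : 0 < j) (hj : y j = 0) (hcard : {x : ℝ | 0 < x ∧ x < j ∧ y x = 0}.ncard = k - 1)
    (hj2 : j < (1 + 1 / 2) * ν) {x : ℝ} (hx : ν ≤ x) (hg : x * gfun (ν / x) = (k : ℝ) - 1 / 4) :
    |j - x| ≤ 3 * ν ^ ((1 : ℝ) / 3) * (k : ℝ) ^ (-(4 : ℝ) / 3) := by
  obtain ⟨hνj, e, he0, heE, hth⟩ := core S h1 hk hj0 hj hcard
  have hν := S.pos
  have hpi := Real.pi_gt_three
  have hk1 : (1:ℝ) ≤ k := by exact_mod_cast hk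
  have hthx : th ν x = ((k : ℝ) - 1 / 4) * π := by rw [← g_eq hν hx, hg]
  have hxν : ν < x := by
    refine lt_of_le_of_ne hx ?_
    rintro rfl
    rw [th_self hν] at hthx
    nlinarith
  have hxj : x ≤ j := by
    by_contra hc
    push Not at hc
    have := th_mono hν hνj.le hx hc
    linarith
  have hr := rr_pos hν hxν
  have hrs := rr_sq hν hxν
  have hrm : ∀ t, x ≤ t → rr ν x ≤ rr ν t := fun t ht => Real.sqrt_le_sqrt (by nlinarith)
  set r := rr ν x with hr_def
  have hEj : EE ν j ≤ EE ν x := by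
    unfold EE
    have := hrm j hxj
    rw [← hr_def]
    gcongr
  have hr3 : k * ν ^ 2 ≤ r ^ 3 := by
    have := th_le hν hx
    rw [hthx, le_div_iff₀ (by positivity)] at this
    have h2 : (k:ℝ) ≤ ((k : ℝ) - 1 / 4) * π * 3 := by nlinarith
    nlinarith [sq_nonneg ν]
  have hE : EE ν x ≤ 7 / 6 * ν ^ 2 / r ^ 3 := by
    have : EE ν x = (3 * r ^ 2 + 5 * ν ^ 2) / (12 * r ^ 3) := by
      unfold EE
      rw [← hr_def]
      field_simp
      ring
    rw [this, div_le_div_iff₀ (by positivity) (by positivity)]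
    have : 3 * r ^ 2 + 5 * ν ^ 2 ≤ 14 * ν ^ 2 := by nlinarith
    nlinarith [pow_pos hr 3]
  have hmv : r / (2 * ν) * (j - x) ≤ th ν j - th ν x := by
    have hm : MonotoneOn (fun t => th ν t - r / (2 * ν) * t) (Icc x j) := by
      refine mono_of (f' := fun t => rr ν t / t - r / (2 * ν)) (convex_Icc x j) (fun t ht => ?_) (fun t ht => ?_)
      · refine ((th_deriv hν (lt_of_lt_of_le hxν ht.1)).sub ((hasDerivAt_id t).const_mul (r / (2 * ν)))).congr_deriv (by simp)
      · have h3 := hrm t ht.1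
        have h4 : t ≤ 2 * ν := by linarith [ht.2]
        have h5 : 0 < t := by linarith [ht.1]
        have : r / (2 * ν) ≤ rr ν t / t := div_le_div₀ (by linarith) h3 h5 h4
        linarith
    have := hm ⟨le_rfl, hxj⟩ ⟨hxj, le_rfl⟩ hxj
    simp only at this
    linarith
  have hd : j - x ≤ 7 / 3 * ν ^ 3 / r ^ 4 := by
    have h6 : r / (2 * ν) * (j - x) ≤ 7 / 6 * ν ^ 2 / r ^ 3 := by linarith
    have h7 : 7 / 6 * ν ^ 2 / r ^ 3 = r / (2 * ν) * (7 / 3 * ν ^ 3 / r ^ 4) := by field_simp; norm_num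
    rw [h7] at h6
    exact le_of_mul_le_mul_left h6 (by positivity)
  rw [abs_of_nonneg (by linarith)]
  set a := ν ^ ((1:ℝ)/3) with ha
  set b := (k:ℝ) ^ ((1:ℝ)/3) with hb
  have hk0 : (0:ℝ) < k := by linarith
  have ha0 : 0 < a := by positivity
  have hb0 : 0 < b := by positivity
  have ha3 : a ^ 3 = ν := by
    rw [ha, ← Real.rpow_natCast, ← Real.rpow_mul hν.le]; norm_num
  have hb3 : b ^ 3 = k := by
    rw [hb, ← Real.rpow_natCast, ← Real.rpow_mul hk0.le]; norm_num
  have hb4 : (k : ℝ) ^ (-(4 : ℝ) / 3) = (b ^ 4)⁻¹ := by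
    rw [hb, ← Real.rpow_natCast, ← Real.rpow_mul hk0.le, ← Real.rpow_neg hk0.le]; norm_num
  rw [hb4]
  have hsr : a ^ 2 * b ≤ r := by
    refine (pow_le_pow_iff_left₀ (by positivity) hr.le (three_ne_zero)).1 ?_
    calc (a ^ 2 * b) ^ 3 = b ^ 3 * (a ^ 3) ^ 2 := by ring
      _ = k * ν ^ 2 := by rw [hb3, ha3]
      _ ≤ r ^ 3 := hr3
  calc j - x ≤ 7 / 3 * ν ^ 3 / r ^ 4 := hd
    _ ≤ 7 / 3 * ν ^ 3 / (a ^ 2 * b) ^ 4 := by gcongr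
    _ = 7 / 3 * a * (b ^ 4)⁻¹ := by rw [← ha3]; field_simp
    _ ≤ 3 * a * (b ^ 4)⁻¹ := by gcongr; norm_num

end BZ

/-- approximation `j_{ν,k} = F(ν, k - 1/4) + O(ν^{1/3} k^{-4/3})` in the regime
`j < (1+c)ν`, for large `ν`. -/
theorem zero_minkowski_approx_near :
    ∃ c N C : ℝ, 0 < c ∧ c < 1 ∧ 0 < N ∧ 0 < C ∧ ∀ ν : ℝ, N < ν → ∀ k : ℕ, 1 ≤ k →
      ∀ j : ℝ, IsKthZero ν k j → j < (1 + c) * ν →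
      ∀ xstar : ℝ, ν ≤ xstar → xstar * gfun (ν / xstar) = (k : ℝ) - 1 / 4 →
      |j - xstar| ≤ C * ν ^ ((1 : ℝ) / 3) * (k : ℝ) ^ (-(4 : ℝ) / 3) := by
  refine ⟨1 / 2, 1, 3, by norm_num, by norm_num, by norm_num, by norm_num, ?_⟩
  intro ν hν k hk j hj hj2 xstar hx hg
  have hν0 : 0 < ν := by linarith
  have S : BZ.Sol ν (besselJ ν) (BZ.zed ν) :=
    ⟨hν0, fun x hx => BZ.J_deriv ν x hν0 hx, fun x hx => BZ.zed_deriv ν x hν0 hx,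
      BZ.J_bdd ν hν0, BZ.J_asymp ν hν0⟩
  exact BZ.final S hν hk hj.1 hj.2.1 hj.2.2 hj2 hx hg
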